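/- arXiv:1808.06850 — 8 statements merged into one kernel-verified Lean document; each statement's English description precedes it below -/
import Mathlib

section
/- There exists a universal constant C > 0 such that for every s ≥ 2, every continuously differentiable function u defined on a neighborhood of the hyperboloid arc H_s = {(√(s²+x²), x) : |x| ≤ (s²−1)/2} in ℝ², and every x with |x| ≤ (s²−1)/2, one has √(s²+x²) · u(√(s²+x²), x)² ≤ C ( ∫_{−(s²−1)/2}^{(s²−1)/2} u(√(s²+z²), z)² dz + ∫_{−(s²−1)/2}^{(s²−1)/2} (Lu)(√(s²+z²), z)² dz ). -/
open MeasureTheory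

/-- Partial derivative in `t` of a function `u(t,x)`. -/
noncomputable def Dt (u : ℝ → ℝ → ℝ) : ℝ → ℝ → ℝ := fun t x => deriv (fun τ => u τ x) t

/-- Partial derivative in `x` of a function `u(t,x)`. -/
noncomputable def Dx (u : ℝ → ℝ → ℝ) : ℝ → ℝ → ℝ := fun t x => deriv (fun y => u t y) x

/-- The Lorentz boost `L u = x ∂_t u + t ∂_x u`. -/
noncomputable def Lop (u : ℝ → ℝ → ℝ) : ℝ → ℝ → ℝ := fun t x => x * Dt u t x + t * Dx u t x

/-- The 1+1-dimensional wave operator `□u = ∂_t∂_t u − ∂_x∂_x u`. -/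
noncomputable def Box (u : ℝ → ℝ → ℝ) : ℝ → ℝ → ℝ := fun t x => Dt (Dt u) t x - Dx (Dx u) t x

/-- The null derivative `∂̃₁ u = (x/|x|) ∂_t u + ∂_x u` (for `x ≠ 0`). -/
noncomputable def Nd (u : ℝ → ℝ → ℝ) : ℝ → ℝ → ℝ := fun t x => (x/|x|) * Dt u t x + Dx u t x

lemma aux_pos (s R : ℝ) (hs : 2 ≤ s) (hR : R = (s^2-1)/2) (v g : ℝ → ℝ)
    (hv : ∀ z ∈ Set.Icc (-R) R, HasDerivAt v (g z / Real.sqrt (s^2+z^2)) z)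
    (hg : ContinuousOn g (Set.Icc (-R) R)) (x : ℝ) (hx0 : 0 ≤ x) (hx : x ≤ R) :
    Real.sqrt (s^2+x^2) * (v x)^2 ≤ 4 * ((∫ z in (-R)..R, (v z)^2) + ∫ z in (-R)..R, (g z)^2) := by
  have hR1 : 3/2 ≤ R := by nlinarith
  set l := Real.sqrt (s^2+x^2) / 2 with hl
  have hsq : Real.sqrt (s^2+x^2) ^ 2 = s^2+x^2 := Real.sq_sqrt (by positivity)
  have hl2 : 4 * l^2 = s^2 + x^2 := by rw [hl]; linarith
  have hl0 : 0 < l := by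
    have : 0 < Real.sqrt (s^2+x^2) := Real.sqrt_pos.2 (by positivity)
    positivity
  have hlR : l ≤ R := by
    have : Real.sqrt (s^2+x^2) ≤ R + 1 := by
      apply Real.sqrt_le_iff.2
      constructor
      · linarith
      · have : x^2 ≤ R^2 := by gcongr
        nlinarith
    linarith
  have hsub : Set.Icc (x-l) x ⊆ Set.Icc (-R) R := Set.Icc_subset_Icc (by linarith) hx
  have hle : x - l ≤ x := by linarith
  have huI : Set.uIcc (x-l) x = Set.Icc (x-l) x := Set.uIcc_of_le hle
  have huR : Set.uIcc (-R) R = Set.Icc (-R) R := Set.uIcc_of_le (by linarith)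
  have hvc : ContinuousOn v (Set.Icc (-R) R) := fun z hz => (hv z hz).continuousAt.continuousWithinAt
  have hτ : ∀ z, 0 < Real.sqrt (s^2+z^2) := fun z => Real.sqrt_pos.2 (by positivity)
  have hτc : Continuous fun z : ℝ => Real.sqrt (s^2+z^2) := by fun_prop
  have hdc : ContinuousOn (fun z => (v z)^2 + (z-(x-l)) * (2 * v z * (g z / Real.sqrt (s^2+z^2)))) (Set.Icc (-R) R) := by
    have : ContinuousOn (fun z => g z / Real.sqrt (s^2+z^2)) (Set.Icc (-R) R) :=
      hg.div hτc.continuousOn (fun z _ => (hτ z).ne')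
    fun_prop
  have hbc : ContinuousOn (fun z => 2 * (v z)^2 + (g z)^2) (Set.Icc (-R) R) := by fun_prop
  have ftc := intervalIntegral.integral_eq_sub_of_hasDerivAt (a := x-l) (b := x)
    (f := fun z => (z-(x-l)) * (v z)^2)
    (f' := fun z => (v z)^2 + (z-(x-l)) * (2 * v z * (g z / Real.sqrt (s^2+z^2)))) (by
      intro z hz
      rw [huI] at hz
      have h1 := ((hasDerivAt_id z).sub_const (x-l)).mul ((hv z (hsub hz)).pow 2)
      refine h1.congr_deriv ?_
      simp) (by
      apply ContinuousOn.intervalIntegrable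
      rw [huI]; exact hdc.mono hsub)
  have hm : (∫ z in (x-l)..x, ((v z)^2 + (z-(x-l)) * (2 * v z * (g z / Real.sqrt (s^2+z^2)))))
      ≤ ∫ z in (x-l)..x, (2 * (v z)^2 + (g z)^2) := by
    apply intervalIntegral.integral_mono_on hle
    · apply ContinuousOn.intervalIntegrable
      rw [huI]; exact hdc.mono hsub
    · apply ContinuousOn.intervalIntegrable
      rw [huI]; exact hbc.mono hsub
    · intro z hz
      have hlz : l ≤ Real.sqrt (s^2+z^2) := by
        apply Real.le_sqrt_of_sq_le
        have : (x-z)^2 ≤ l^2 := by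
          apply pow_le_pow_left₀ <;> linarith [hz.1, hz.2]
        nlinarith [sq_nonneg (x-2*z)]
      set k := (z-(x-l)) / Real.sqrt (s^2+z^2) with hk
      have hk0 : 0 ≤ k := div_nonneg (by linarith [hz.1]) (hτ z).le
      have hk1 : k ≤ 1 := by
        rw [hk, div_le_one (hτ z)]; linarith [hz.2]
      have e : (z-(x-l)) * (2 * v z * (g z / Real.sqrt (s^2+z^2))) = k * (2 * v z * g z) := by
        rw [hk]; ring
      rw [e]
      nlinarith [mul_nonneg hk0 (sq_nonneg (v z - g z)), mul_nonneg (sub_nonneg.2 hk1) (add_nonneg (sq_nonneg (v z)) (sq_nonneg (g z)))]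
  have hm2 : (∫ z in (x-l)..x, (2 * (v z)^2 + (g z)^2)) ≤ ∫ z in (-R)..R, (2 * (v z)^2 + (g z)^2) := by
    apply intervalIntegral.integral_mono_interval (by linarith) hle hx
    · exact Filter.Eventually.of_forall fun z => by simp only [Pi.zero_apply]; positivity
    · apply ContinuousOn.intervalIntegrable
      rw [huR]; exact hbc
  have hadd : (∫ z in (-R)..R, (2 * (v z)^2 + (g z)^2)) = 2 * (∫ z in (-R)..R, (v z)^2) + ∫ z in (-R)..R, (g z)^2 := by
    rw [intervalIntegral.integral_add, intervalIntegral.integral_const_mul]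
    · apply ContinuousOn.intervalIntegrable
      rw [huR]; fun_prop
    · apply ContinuousOn.intervalIntegrable
      rw [huR]; fun_prop
  have hgn : 0 ≤ ∫ z in (-R)..R, (g z)^2 :=
    intervalIntegral.integral_nonneg (by linarith) (fun z _ => sq_nonneg _)
  have e2 : Real.sqrt (s^2+x^2) = 2 * l := by rw [hl]; ring
  rw [e2]
  have : l * (v x)^2 ≤ 2 * (∫ z in (-R)..R, (v z)^2) + ∫ z in (-R)..R, (g z)^2 := by
    have e3 : (x - (x-l)) * v x^2 - (x - l - (x-l)) * v (x-l)^2 = l * v x^2 := by ring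
    linarith
  linarith

lemma aux_all (s R : ℝ) (hs : 2 ≤ s) (hR : R = (s^2-1)/2) (v g : ℝ → ℝ)
    (hv : ∀ z ∈ Set.Icc (-R) R, HasDerivAt v (g z / Real.sqrt (s^2+z^2)) z)
    (hg : ContinuousOn g (Set.Icc (-R) R)) (x : ℝ) (hx : |x| ≤ R) :
    Real.sqrt (s^2+x^2) * (v x)^2 ≤ 4 * ((∫ z in (-R)..R, (v z)^2) + ∫ z in (-R)..R, (g z)^2) := by
  rcases le_total 0 x with h | h
  · exact aux_pos s R hs hR v g hv hg x h ((le_abs_self x).trans hx)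
  · have hneg : ∀ z ∈ Set.Icc (-R) R, -z ∈ Set.Icc (-R) R := fun z hz =>
      ⟨by linarith [hz.2], by linarith [hz.1]⟩
    have := aux_pos s R hs hR (fun z => v (-z)) (fun z => - g (-z)) (by
      intro z hz
      have h1 := hv (-z) (hneg z hz)
      have h2 := h1.comp z (hasDerivAt_neg z)
      refine h2.congr_deriv ?_
      rw [neg_sq]; ring) ((hg.comp continuous_neg.continuousOn hneg).neg) (-x) (by linarith)
      ((neg_le_abs x).trans hx)
    have i1 := intervalIntegral.integral_comp_neg (a := -R) (b := R) (fun z => (v z)^2)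
    have i2 := intervalIntegral.integral_comp_neg (a := -R) (b := R) (fun z => (g z)^2)
    simp only [neg_neg, neg_sq] at this i1 i2
    rw [i1, i2] at this
    exact this

/-- global Sobolev inequality on the hyperboloid arc
`H_s = {(√(s²+x²),x) : |x| ≤ (s²−1)/2}`: there is a universal `C > 0` such that for every
`s ≥ 2`, every `C¹` function `u` on a neighborhood of `H_s`, and every `|x| ≤ (s²−1)/2`,
`√(s²+x²)·u(√(s²+x²),x)² ≤ C (‖u‖²_{L²(H_s)} + ‖Lu‖²_{L²(H_s)})`. -/
theorem stmt4 :
    ∃ C > (0:ℝ), ∀ s : ℝ, 2 ≤ s →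
      ∀ U : Set (ℝ × ℝ), IsOpen U →
        {p : ℝ × ℝ | ∃ z : ℝ, |z| ≤ (s^2 - 1)/2 ∧ p = (Real.sqrt (s^2 + z^2), z)} ⊆ U →
      ∀ u : ℝ → ℝ → ℝ, ContDiffOn ℝ 1 (fun p : ℝ × ℝ => u p.1 p.2) U →
      ∀ x : ℝ, |x| ≤ (s^2 - 1)/2 →
        Real.sqrt (s^2 + x^2) * (u (Real.sqrt (s^2 + x^2)) x)^2 ≤
          C * ((∫ z in (-((s^2 - 1)/2))..((s^2 - 1)/2), (u (Real.sqrt (s^2 + z^2)) z)^2) +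
               (∫ z in (-((s^2 - 1)/2))..((s^2 - 1)/2), (Lop u (Real.sqrt (s^2 + z^2)) z)^2)) := by
  refine ⟨4, by norm_num, ?_⟩
  intro s hs U hU hsub u hu x hx
  set R := (s^2-1)/2 with hR
  have hmem : ∀ z ∈ Set.Icc (-R) R, (Real.sqrt (s^2+z^2), z) ∈ U := fun z hz =>
    hsub ⟨z, abs_le.2 hz, rfl⟩
  set f : ℝ × ℝ → ℝ := fun p => u p.1 p.2 with hf
  have hfd : ∀ p ∈ U, HasFDerivAt f (fderiv ℝ f p) p := fun p hp =>
    ((hu.differentiableOn one_ne_zero p hp).differentiableAt (hU.mem_nhds hp)).hasFDerivAt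
  have hτ : ∀ z, 0 < Real.sqrt (s^2+z^2) := fun z => Real.sqrt_pos.2 (by positivity)
  have hτc : Continuous fun z : ℝ => Real.sqrt (s^2+z^2) := by fun_prop
  have hL : ∀ z ∈ Set.Icc (-R) R, Lop u (Real.sqrt (s^2+z^2)) z =
      fderiv ℝ f (Real.sqrt (s^2+z^2), z) (z, Real.sqrt (s^2+z^2)) := by
    intro z hz
    have h := hfd _ (hmem z hz)
    have h1 : Dt u (Real.sqrt (s^2+z^2)) z = fderiv ℝ f (Real.sqrt (s^2+z^2), z) (1, 0) :=
      (h.comp_hasDerivAt (Real.sqrt (s^2+z^2)) (f := fun τ => (τ, z)) ((hasDerivAt_id _).prodMk (hasDerivAt_const _ z))).deriv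
    have h2 : Dx u (Real.sqrt (s^2+z^2)) z = fderiv ℝ f (Real.sqrt (s^2+z^2), z) (0, 1) :=
      (h.comp_hasDerivAt z (f := fun y => (Real.sqrt (s^2+z^2), y)) ((hasDerivAt_const _ _).prodMk (hasDerivAt_id _))).deriv
    have e : ((z, Real.sqrt (s^2+z^2)) : ℝ × ℝ) = z • ((1:ℝ), (0:ℝ)) + Real.sqrt (s^2+z^2) • ((0:ℝ), (1:ℝ)) := by
      simp
    rw [Lop, h1, h2, e, map_add, map_smul, map_smul, smul_eq_mul, smul_eq_mul]
  apply aux_all s R hs hR (fun z => u (Real.sqrt (s^2+z^2)) z) (fun z => Lop u (Real.sqrt (s^2+z^2)) z) _ _ x hx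
  · intro z hz
    have h := hfd _ (hmem z hz)
    have hd : HasDerivAt (fun y : ℝ => Real.sqrt (s^2+y^2)) (z / Real.sqrt (s^2+z^2)) z := by
      have h1 : HasDerivAt (fun y : ℝ => s^2+y^2) (2*z) z := by
        simpa using (hasDerivAt_pow 2 z).const_add (s^2)
      refine (h1.sqrt (by positivity)).congr_deriv ?_
      field_simp
    have h3 := h.comp_hasDerivAt z (f := fun y => (Real.sqrt (s^2+y^2), y)) (hd.prodMk (hasDerivAt_id _))
    refine h3.congr_deriv ?_
    rw [hL z hz]
    have e : ((z / Real.sqrt (s^2+z^2), 1) : ℝ × ℝ) = (Real.sqrt (s^2+z^2))⁻¹ • (z, Real.sqrt (s^2+z^2)) := by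
      ext
      · simp; ring
      · simp [(hτ z).ne']
    rw [e, map_smul, smul_eq_mul]; ring
  · refine ContinuousOn.congr ?_ hL
    have hc : ContinuousOn (fderiv ℝ f) U := hu.continuousOn_fderiv_of_isOpen hU le_rfl
    have hc2 : ContinuousOn (fun z : ℝ => fderiv ℝ f (Real.sqrt (s^2+z^2), z)) (Set.Icc (-R) R) :=
      hc.comp (hτc.prodMk continuous_id).continuousOn hmem
    exact hc2.clm_apply (continuous_id.prodMk hτc).continuousOn
end

section
/- For all nonnegative integers a, b, j there exists a constant C = C(a,b,j) > 0 such that for every (t,x) ∈ ℝ² with t ≥ 0 and |x| − t ≥ 1, one has |∂_t^a ∂_x^b ( L^j ( (|x|−t)^{−1} ) )(t,x)| ≤ C (1 + (|x|−t))^{−1−a−b}, where the function (t,x) ↦ (|x|−t)^{−1} is smooth on the region {|x| − t ≥ 1}. -/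
open MeasureTheory

/-- On the sector of sign `σ`, `u` is a multiple of the `n`-th power of `σ x - t`. -/
def PP (σ : ℝ) (n : ℤ) (u : ℝ → ℝ → ℝ) : Prop :=
  ∃ c : ℝ, ∀ t x : ℝ, 0 < σ * x → 0 < σ * x - t → u t x = c * (σ * x - t) ^ n

lemma dt_aux {σ : ℝ} {n : ℤ} {u : ℝ → ℝ → ℝ} {c : ℝ}
    (h : ∀ t x : ℝ, 0 < σ * x → 0 < σ * x - t → u t x = c * (σ * x - t) ^ n)
    (t x : ℝ) (h1 : 0 < σ * x) (h2 : 0 < σ * x - t) :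
    Dt u t x = (-(c * n)) * (σ * x - t) ^ (n - 1) := by
  have e : (fun τ => u τ x) =ᶠ[nhds t] fun τ => c * (σ * x - τ) ^ n := by
    have : ∀ᶠ τ in nhds t, 0 < σ * x - τ :=
      (by fun_prop : ContinuousAt (fun τ => σ * x - τ) t).eventually_const_lt h2
    filter_upwards [this] with τ hτ using h τ x h1 hτ
  unfold Dt
  rw [e.deriv_eq]
  have d : HasDerivAt (fun τ : ℝ => σ * x - τ) (-1) t := by
    simpa using (hasDerivAt_id t).const_sub (σ * x)
  have d2 := ((hasDerivAt_zpow n (σ * x - t) (Or.inl h2.ne')).comp t d).const_mul c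
  have d3 := d2.deriv
  simp only [Function.comp_def] at d3
  rw [d3]; ring

lemma dx_aux {σ : ℝ} {n : ℤ} {u : ℝ → ℝ → ℝ} {c : ℝ}
    (h : ∀ t x : ℝ, 0 < σ * x → 0 < σ * x - t → u t x = c * (σ * x - t) ^ n)
    (t x : ℝ) (h1 : 0 < σ * x) (h2 : 0 < σ * x - t) :
    Dx u t x = (σ * (c * n)) * (σ * x - t) ^ (n - 1) := by
  have e : (fun y => u t y) =ᶠ[nhds x] fun y => c * (σ * y - t) ^ n := by
    have g2 : ∀ᶠ y in nhds x, 0 < σ * y - t :=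
      (by fun_prop : ContinuousAt (fun y => σ * y - t) x).eventually_const_lt h2
    have g1 : ∀ᶠ y in nhds x, 0 < σ * y :=
      (by fun_prop : ContinuousAt (fun y => σ * y) x).eventually_const_lt h1
    filter_upwards [g1, g2] with y q1 q2 using h t y q1 q2
  unfold Dx
  rw [e.deriv_eq]
  have d : HasDerivAt (fun y : ℝ => σ * y - t) σ x := by
    simpa using ((hasDerivAt_id x).const_mul σ).sub_const t
  have d2 := ((hasDerivAt_zpow n (σ * x - t) (Or.inl h2.ne')).comp x d).const_mul c
  have d3 := d2.deriv
  simp only [Function.comp_def] at d3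
  rw [d3]; ring

lemma PP.dt {σ : ℝ} {n : ℤ} {u : ℝ → ℝ → ℝ} (h : PP σ n u) : PP σ (n - 1) (Dt u) := by
  obtain ⟨c, h⟩ := h
  exact ⟨_, dt_aux h⟩

lemma PP.dx {σ : ℝ} {n : ℤ} {u : ℝ → ℝ → ℝ} (h : PP σ n u) : PP σ (n - 1) (Dx u) := by
  obtain ⟨c, h⟩ := h
  exact ⟨_, dx_aux h⟩

lemma PP.lop {σ : ℝ} (hσ : σ * σ = 1) {n : ℤ} {u : ℝ → ℝ → ℝ} (h : PP σ n u) :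
    PP σ n (Lop u) := by
  obtain ⟨c, h⟩ := h
  refine ⟨-(σ * (c * n)), fun t x h1 h2 => ?_⟩
  unfold Lop
  rw [dt_aux h t x h1 h2, dx_aux h t x h1 h2]
  have : (σ * x - t) ^ n = (σ * x - t) ^ (n - 1) * (σ * x - t) := by
    rw [← zpow_add_one₀ h2.ne']; simp
  rw [this]
  linear_combination (c * n * x * (σ * x - t) ^ (n - 1)) * hσ

lemma PP.all {σ : ℝ} (hσ : σ * σ = 1) {u : ℝ → ℝ → ℝ} (h : PP σ (-1) u) (a b j : ℕ) :
    PP σ (-(1 + (a:ℤ) + (b:ℤ))) (Dt^[a] (Dx^[b] (Lop^[j] u))) := by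
  induction a with
  | succ a ih =>
    rw [Function.iterate_succ_apply']
    convert ih.dt using 1
    push_cast; ring
  | zero =>
    induction b with
    | succ b ih =>
      simp only [Function.iterate_zero, id] at ih ⊢
      rw [Function.iterate_succ_apply']
      convert ih.dx using 1
      push_cast; ring
    | zero =>
      induction j with
      | zero => simpa using h
      | succ j ih =>
        simp only [Function.iterate_zero, id] at ih ⊢
        rw [Function.iterate_succ_apply']
        exact ih.lop hσ

lemma bound_aux (c s : ℝ) (hs : 1 ≤ s) (m : ℕ) :
    |c * s ^ (-(m:ℤ))| ≤ |c| * 2 ^ m * (1 + s) ^ (-(m:ℤ)) := by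
  have h0 : 0 < s := by linarith
  rw [abs_mul, abs_of_pos (zpow_pos h0 _), mul_assoc]
  refine mul_le_mul_of_nonneg_left ?_ (abs_nonneg c)
  rw [zpow_neg, zpow_neg, zpow_natCast, zpow_natCast, ← div_eq_mul_inv,
    le_div_iff₀ (by positivity), ← div_eq_inv_mul, div_le_iff₀ (by positivity), ← mul_pow]
  exact pow_le_pow_left₀ (by positivity) (by linarith) m

/-- `|∂_t^a ∂_x^b L^j ((|x|−t)^{−1})| ≤ C(a,b,j)(1+(|x|−t))^{−1−a−b}`
on the region `{t ≥ 0, |x|−t ≥ 1}`. -/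
theorem stmt9 (a b j : ℕ) :
    ∃ C > (0:ℝ), ∀ t x : ℝ, 0 ≤ t → 1 ≤ |x| - t →
      |(Dt^[a] (Dx^[b] (Lop^[j] (fun t x => (|x| - t)⁻¹)))) t x| ≤
        C * (1 + (|x| - t)) ^ (-(1 + (a:ℤ) + (b:ℤ))) := by
  have hp : PP 1 (-1) (fun t x => (|x| - t)⁻¹) := ⟨1, fun t x h1 h2 => by
    have : 0 < x := by linarith
    simp [abs_of_pos this]⟩
  have hm : PP (-1) (-1) (fun t x => (|x| - t)⁻¹) := ⟨1, fun t x h1 h2 => by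
    have : x < 0 := by linarith
    simp [abs_of_neg this]⟩
  obtain ⟨c, hc⟩ := hp.all (by norm_num) a b j
  obtain ⟨d, hd⟩ := hm.all (by norm_num) a b j
  have em : (1 + (a:ℤ) + (b:ℤ)) = ((1 + a + b : ℕ) : ℤ) := by push_cast; ring
  refine ⟨(|c| + |d| + 1) * 2 ^ (1 + a + b), by positivity, fun t x ht hx => ?_⟩
  have key : ∀ e : ℝ, |e| ≤ |c| + |d| + 1 →
      |e * (|x| - t) ^ (-(1 + (a:ℤ) + (b:ℤ)))| ≤
      (|c| + |d| + 1) * 2 ^ (1 + a + b) * (1 + (|x| - t)) ^ (-(1 + (a:ℤ) + (b:ℤ))) := by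
    intro e he
    rw [em]
    refine (bound_aux e _ hx _).trans ?_
    have : 0 < 1 + (|x| - t) := by linarith
    gcongr
  have hx0 : 0 < |x| := by linarith
  rcases lt_or_gt_of_ne (abs_pos.mp hx0) with h | h
  · have ea : |x| = -1 * x := by rw [abs_of_neg h]; ring
    rw [hd t x (by linarith) (by linarith), ← ea]
    exact key d (by linarith [abs_nonneg c])
  · have ea : |x| = 1 * x := by rw [abs_of_pos h]; ring
    rw [hc t x (by linarith) (by linarith), ← ea]
    exact key c (by linarith [abs_nonneg d])
end

section
/- Let u be a twice continuously differentiable function on an open subset of {(t,x) ∈ ℝ² : t > 0}. Then on that set the wave operator decomposes as □u = (1 − (x/t)²) ∂_t∂_t u + t^{−1} ( (x/t) ∂_t(Lu) − ∂_x(Lu) − (x/t) ∂_x u + ∂_t u ). -/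
open MeasureTheory

theorem aux_t (g : ℝ × ℝ → ℝ) (g' : ℝ × ℝ →L[ℝ] ℝ) (p : ℝ × ℝ) (h : HasFDerivAt g g' p) :
    HasDerivAt (fun τ => g (τ, p.2)) (g' (1, 0)) p.1 := by
  have h1 : HasDerivAt (fun τ : ℝ => (τ, p.2)) ((1 : ℝ), (0 : ℝ)) p.1 :=
    (hasDerivAt_id p.1).prodMk (hasDerivAt_const p.1 p.2)
  exact HasFDerivAt.comp_hasDerivAt (f := fun τ : ℝ => (τ, p.2)) p.1 h h1

theorem aux_x (g : ℝ × ℝ → ℝ) (g' : ℝ × ℝ →L[ℝ] ℝ) (p : ℝ × ℝ) (h : HasFDerivAt g g' p) :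
    HasDerivAt (fun y => g (p.1, y)) (g' (0, 1)) p.2 := by
  have h1 : HasDerivAt (fun y : ℝ => (p.1, y)) ((0 : ℝ), (1 : ℝ)) p.2 :=
    (hasDerivAt_const p.2 p.1).prodMk (hasDerivAt_id p.2)
  exact HasFDerivAt.comp_hasDerivAt (f := fun y : ℝ => (p.1, y)) p.2 h h1

/-- the semi-hyperboloidal decomposition of the wave operator
`□u = (1 − (x/t)²)∂_t∂_t u + t⁻¹((x/t)∂_t(Lu) − ∂_x(Lu) − (x/t)∂_x u + ∂_t u)`
on an open subset of `{t > 0}`, for `u` twice continuously differentiable there. -/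
theorem stmt10 (u : ℝ → ℝ → ℝ) (U : Set (ℝ × ℝ)) (hU : IsOpen U)
    (hUsub : U ⊆ {p : ℝ × ℝ | 0 < p.1})
    (hu : ContDiffOn ℝ 2 (fun p : ℝ × ℝ => u p.1 p.2) U) :
    ∀ p ∈ U, Box u p.1 p.2 =
      (1 - (p.2/p.1)^2) * Dt (Dt u) p.1 p.2
      + p.1⁻¹ * ((p.2/p.1) * Dt (Lop u) p.1 p.2 - Dx (Lop u) p.1 p.2
          - (p.2/p.1) * Dx u p.1 p.2 + Dt u p.1 p.2) := by
  intro p hp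
  have hpos : 0 < p.1 := hUsub hp
  set f : ℝ × ℝ → ℝ := fun p => u p.1 p.2 with hf
  have hcd : ∀ q ∈ U, ContDiffAt ℝ 2 f q := fun q hq => hu.contDiffAt (hU.mem_nhds hq)
  have hd : ∀ q ∈ U, HasFDerivAt f (fderiv ℝ f q) q := fun q hq =>
    ((hcd q hq).differentiableAt (by norm_num)).hasFDerivAt
  have ht : ∀ q ∈ U, Dt u q.1 q.2 = fderiv ℝ f q (1, 0) := fun q hq =>
    (aux_t f _ q (hd q hq)).deriv
  have hx : ∀ q ∈ U, Dx u q.1 q.2 = fderiv ℝ f q (0, 1) := fun q hq =>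
    (aux_x f _ q (hd q hq)).deriv
  have hF : HasFDerivAt (fderiv ℝ f) (fderiv ℝ (fderiv ℝ f) p) p :=
    (((hcd p hp).fderiv_right (m := 1) (by norm_num)).differentiableAt
      (by norm_num)).hasFDerivAt
  have hsymm : fderiv ℝ (fderiv ℝ f) p (1, 0) (0, 1) = fderiv ℝ (fderiv ℝ f) p (0, 1) (1, 0) :=
    ((hcd p hp).isSymmSndFDerivAt (by simp)) _ _
  set F2 := fderiv ℝ (fderiv ℝ f) p with hF2
  have hmem : ∀ᶠ q in nhds p, q ∈ U := hU.mem_nhds hp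
  have hG : ∀ v : ℝ × ℝ, HasFDerivAt (fun q => fderiv ℝ f q v)
      ((ContinuousLinearMap.apply ℝ ℝ v).comp F2) p := fun v =>
    (ContinuousLinearMap.apply ℝ ℝ v).hasFDerivAt.comp p hF
  have hDt : HasFDerivAt (fun q : ℝ × ℝ => Dt u q.1 q.2)
      ((ContinuousLinearMap.apply ℝ ℝ ((1 : ℝ), (0 : ℝ))).comp F2) p :=
    (hG (1, 0)).congr_of_eventuallyEq (hmem.mono fun q hq => ht q hq)
  have hDx : HasFDerivAt (fun q : ℝ × ℝ => Dx u q.1 q.2)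
      ((ContinuousLinearMap.apply ℝ ℝ ((0 : ℝ), (1 : ℝ))).comp F2) p :=
    (hG (0, 1)).congr_of_eventuallyEq (hmem.mono fun q hq => hx q hq)
  have htt := aux_t _ _ p hDt
  have hxt := aux_x _ _ p hDt
  have htx := aux_t _ _ p hDx
  have hxx := aux_x _ _ p hDx
  simp only [ContinuousLinearMap.comp_apply, ContinuousLinearMap.apply_apply] at htt hxt htx hxx
  have e1 : Dt (Dt u) p.1 p.2 = F2 (1, 0) (1, 0) := htt.deriv
  have e2 : Dx (Dx u) p.1 p.2 = F2 (0, 1) (0, 1) := hxx.deriv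
  have e3 : Dt (Lop u) p.1 p.2 = p.2 * F2 (1, 0) (1, 0)
      + (1 * Dx u p.1 p.2 + p.1 * F2 (1, 0) (0, 1)) :=
    ((htt.const_mul p.2).add ((hasDerivAt_id p.1).mul htx)).deriv
  have e4 : Dx (Lop u) p.1 p.2 = (1 * Dt u p.1 p.2 + p.2 * F2 (0, 1) (1, 0))
      + p.1 * F2 (0, 1) (0, 1) :=
    (((hasDerivAt_id p.2).mul hxt).add (hxx.const_mul p.1)).deriv
  rw [e3, e4, Box, e1, e2, hsymm]
  field_simp
  ring
end

section
/- For all nonnegative integers a, b, j there exists a constant C = C(a,b,j) > 0 such that for every smooth function u on {(t,x) ∈ ℝ² : t > 0, x ≠ 0} and every point (t,x) with t > 0 and x ≠ 0, one has |(|x| − t) · ∂_t∂_t (∂_t^a ∂_x^b L^j u)(t,x)| ≤ (t²/|x|) |□(∂_t^a ∂_x^b L^j u)(t,x)| + C · Σ |∂_α (∂_t^{a′} ∂_x^{b′} L^{j′} u)(t,x)|, where the sum runs over α ∈ {t,x}, nonnegative integers a′, b′ with a′ + b′ ≤ a + b, and j′ ≤ j + 1. -/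
open MeasureTheory

def Om : Set (ℝ × ℝ) := {p : ℝ × ℝ | 0 < p.1 ∧ p.2 ≠ 0}

theorem Om_open : IsOpen Om :=
  (isOpen_lt continuous_const continuous_fst).inter (isOpen_ne_fun continuous_snd continuous_const)

def Sm (u : ℝ → ℝ → ℝ) : Prop :=
  ContDiffOn ℝ (⊤ : ℕ∞) (fun p : ℝ × ℝ => u p.1 p.2) Om

def Eo (f g : ℝ → ℝ → ℝ) : Prop := ∀ t x : ℝ, 0 < t → x ≠ 0 → f t x = g t x

theorem Eo.trans' {f g h : ℝ → ℝ → ℝ} (h1 : Eo f g) (h2 : Eo g h) : Eo f h :=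
  fun t x ht hx => (h1 t x ht hx).trans (h2 t x ht hx)

theorem Eo.dt {f g : ℝ → ℝ → ℝ} (h : Eo f g) : Eo (Dt f) (Dt g) := by
  intro t x ht hx
  apply Filter.EventuallyEq.deriv_eq
  filter_upwards [lt_mem_nhds ht] with s hs using h s x hs hx

theorem Eo.dx {f g : ℝ → ℝ → ℝ} (h : Eo f g) : Eo (Dx f) (Dx g) := by
  intro t x ht hx
  apply Filter.EventuallyEq.deriv_eq
  filter_upwards [isOpen_ne.mem_nhds hx] with s hs using h t s ht hs

theorem Eo.lop {f g : ℝ → ℝ → ℝ} (h : Eo f g) : Eo (Lop f) (Lop g) := by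
  intro t x ht hx
  simp only [Lop, h.dt t x ht hx, h.dx t x ht hx]

theorem Eo.dtn {f g : ℝ → ℝ → ℝ} (h : Eo f g) (n : ℕ) : Eo (Dt^[n] f) (Dt^[n] g) := by
  induction n with
  | zero => exact h
  | succ n ih => rw [Function.iterate_succ_apply', Function.iterate_succ_apply']; exact ih.dt

theorem Sm.hasF {f : ℝ → ℝ → ℝ} (h : Sm f) {p : ℝ × ℝ} (hp : p ∈ Om) :
    HasFDerivAt (fun p : ℝ × ℝ => f p.1 p.2) (fderiv ℝ (fun p : ℝ × ℝ => f p.1 p.2) p) p :=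
  ((ContDiffOn.contDiffAt h (Om_open.mem_nhds hp)).differentiableAt (by simp)).hasFDerivAt

theorem Sm.ht' {f : ℝ → ℝ → ℝ} (h : Sm f) {t x : ℝ} (ht : 0 < t) (hx : x ≠ 0) :
    HasDerivAt (fun τ => f τ x) (fderiv ℝ (fun p : ℝ × ℝ => f p.1 p.2) (t, x) (1, 0)) t := by
  have := (h.hasF (p := (t, x)) ⟨ht, hx⟩)
  exact this.comp_hasDerivAt (f := fun τ : ℝ => (τ, x)) t
    ((hasDerivAt_id t).prodMk (hasDerivAt_const t x))

theorem Sm.hx' {f : ℝ → ℝ → ℝ} (h : Sm f) {t x : ℝ} (ht : 0 < t) (hx : x ≠ 0) :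
    HasDerivAt (fun y => f t y) (fderiv ℝ (fun p : ℝ × ℝ => f p.1 p.2) (t, x) (0, 1)) x := by
  have := (h.hasF (p := (t, x)) ⟨ht, hx⟩)
  exact this.comp_hasDerivAt (f := fun y : ℝ => (t, y)) x
    ((hasDerivAt_const x t).prodMk (hasDerivAt_id x))

theorem Sm.ht {f : ℝ → ℝ → ℝ} (h : Sm f) {t x : ℝ} (ht : 0 < t) (hx : x ≠ 0) :
    HasDerivAt (fun τ => f τ x) (Dt f t x) t := (h.ht' ht hx).differentiableAt.hasDerivAt

theorem Sm.hx {f : ℝ → ℝ → ℝ} (h : Sm f) {t x : ℝ} (ht : 0 < t) (hx : x ≠ 0) :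
    HasDerivAt (fun y => f t y) (Dx f t x) x := (h.hx' ht hx).differentiableAt.hasDerivAt

theorem Sm.fd {f : ℝ → ℝ → ℝ} (h : Sm f) :
    ContDiffOn ℝ (⊤ : ℕ∞) (fderiv ℝ (fun p : ℝ × ℝ => f p.1 p.2)) Om :=
  ContDiffOn.fderiv_of_isOpen h Om_open (by simp)

theorem Sm.dt {f : ℝ → ℝ → ℝ} (h : Sm f) : Sm (Dt f) :=
  (h.fd.clm_apply (contDiffOn_const (c := ((1, 0) : ℝ × ℝ)))).congr
    (fun _ hp => (h.ht' hp.1 hp.2).deriv)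

theorem Sm.dx {f : ℝ → ℝ → ℝ} (h : Sm f) : Sm (Dx f) :=
  (h.fd.clm_apply (contDiffOn_const (c := ((0, 1) : ℝ × ℝ)))).congr
    (fun _ hp => (h.hx' hp.1 hp.2).deriv)

theorem Sm.lop {f : ℝ → ℝ → ℝ} (h : Sm f) : Sm (Lop f) :=
  (contDiffOn_snd.mul h.dt).add (contDiffOn_fst.mul h.dx)

theorem Sm.dtn {f : ℝ → ℝ → ℝ} (h : Sm f) (n : ℕ) : Sm (Dt^[n] f) := by
  induction n with
  | zero => exact h
  | succ n ih => rw [Function.iterate_succ_apply']; exact ih.dt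

theorem Sm.dxn {f : ℝ → ℝ → ℝ} (h : Sm f) (n : ℕ) : Sm (Dx^[n] f) := by
  induction n with
  | zero => exact h
  | succ n ih => rw [Function.iterate_succ_apply']; exact ih.dx

theorem Sm.lopn {f : ℝ → ℝ → ℝ} (h : Sm f) (n : ℕ) : Sm (Lop^[n] f) := by
  induction n with
  | zero => exact h
  | succ n ih => rw [Function.iterate_succ_apply']; exact ih.lop

theorem Sm.comm {f : ℝ → ℝ → ℝ} (h : Sm f) : Eo (Dx (Dt f)) (Dt (Dx f)) := by
  intro t x ht hx
  have hp : ((t, x) : ℝ × ℝ) ∈ Om := ⟨ht, hx⟩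
  have hF := ((h.fd.contDiffAt (Om_open.mem_nhds hp)).differentiableAt (by simp)).hasFDerivAt
  have hs : IsSymmSndFDerivAt ℝ (fun p : ℝ × ℝ => f p.1 p.2) (t, x) :=
    (ContDiffOn.contDiffAt h (Om_open.mem_nhds hp)).isSymmSndFDerivAt (by
      simp only [minSmoothness_of_isRCLikeNormedField]; exact WithTop.coe_le_coe.2 (le_top (a := (2 : ℕ∞))))
  have e1 : Eo (Dt f) (fun t x => fderiv ℝ (fun p : ℝ × ℝ => f p.1 p.2) (t, x) (1, 0)) :=
    fun t x ht hx => (h.ht' ht hx).deriv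
  have e2 : Eo (Dx f) (fun t x => fderiv ℝ (fun p : ℝ × ℝ => f p.1 p.2) (t, x) (0, 1)) :=
    fun t x ht hx => (h.hx' ht hx).deriv
  rw [e1.dx t x ht hx, e2.dt t x ht hx]
  have a1 := hF.comp_hasDerivAt (f := fun y : ℝ => (t, y)) x
    ((hasDerivAt_const x t).prodMk (hasDerivAt_id x))
  have a2 := hF.comp_hasDerivAt (f := fun τ : ℝ => (τ, x)) t
    ((hasDerivAt_id t).prodMk (hasDerivAt_const t x))
  have b1 := (a1.clm_apply (hasDerivAt_const x ((1, 0) : ℝ × ℝ))).deriv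
  have b2 := (a2.clm_apply (hasDerivAt_const t ((0, 1) : ℝ × ℝ))).deriv
  simp only [Function.comp_def, map_zero, add_zero] at b1 b2
  simp only [Dt, Dx]
  rw [b1, b2]
  exact hs _ _

/-- linear combination -/
def lc (f : ℝ → ℝ → ℝ) (c : ℝ) (g : ℝ → ℝ → ℝ) : ℝ → ℝ → ℝ := fun t x => f t x - c * g t x

theorem dt_lc {f g : ℝ → ℝ → ℝ} (hf : Sm f) (hg : Sm g) (c : ℝ) :
    Eo (Dt (lc f c g)) (lc (Dt f) c (Dt g)) := fun _ _ ht hx =>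
  ((hf.ht ht hx).sub ((hg.ht ht hx).const_mul c)).deriv

theorem dx_lc {f g : ℝ → ℝ → ℝ} (hf : Sm f) (hg : Sm g) (c : ℝ) :
    Eo (Dx (lc f c g)) (lc (Dx f) c (Dx g)) := fun _ _ ht hx =>
  ((hf.hx ht hx).sub ((hg.hx ht hx).const_mul c)).deriv

theorem dtn_lc {f g : ℝ → ℝ → ℝ} (hf : Sm f) (hg : Sm g) (c : ℝ) (n : ℕ) :
    Eo (Dt^[n] (lc f c g)) (lc (Dt^[n] f) c (Dt^[n] g)) := by
  induction n with
  | zero => exact fun _ _ _ _ => rfl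
  | succ n ih =>
    simp only [Function.iterate_succ_apply']
    exact ih.dt.trans' (dt_lc (hf.dtn n) (hg.dtn n) c)

theorem lop_dt {f : ℝ → ℝ → ℝ} (h : Sm f) : Eo (Lop (Dt f)) (lc (Dt (Lop f)) 1 (Dx f)) := by
  intro t x ht hx
  have e : Dt (Lop f) t x = _ := (((h.dt.ht ht hx).const_mul x).add
    ((hasDerivAt_id t).mul (h.dx.ht ht hx))).deriv
  have c := h.comm t x ht hx
  simp only [lc, e, Lop, c, id]
  ring

theorem lop_dx {f : ℝ → ℝ → ℝ} (h : Sm f) : Eo (Lop (Dx f)) (lc (Dx (Lop f)) 1 (Dt f)) := by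
  intro t x ht hx
  have e : Dx (Lop f) t x = _ := (((hasDerivAt_id x).mul (h.dt.hx ht hx)).add
    ((h.dx.hx ht hx).const_mul t)).deriv
  have c := h.comm t x ht hx
  simp only [lc, e, Lop, c, id]
  ring

theorem lop_dxn {f : ℝ → ℝ → ℝ} (h : Sm f) (q : ℕ) :
    Eo (Lop (Dx^[q] f)) (lc (Dx^[q] (Lop f)) q (Dt (Dx^[q-1] f))) := by
  induction q with
  | zero => intro t x _ _; simp [lc]
  | succ q ih =>
    intro t x ht hx
    simp only [Function.iterate_succ_apply']
    rw [lop_dx (h.dxn q) t x ht hx]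
    simp only [lc]
    rw [ih.dx t x ht hx, dx_lc (h.lop.dxn q) (h.dxn _).dt _ t x ht hx]
    simp only [lc]
    rw [(h.dxn (q-1)).comm t x ht hx, ← Function.iterate_succ_apply' Dx (q-1)]
    cases q with
    | zero => simp
    | succ n => simp; ring

theorem lop_dtn {f : ℝ → ℝ → ℝ} (h : Sm f) (q : ℕ) :
    Eo (Lop (Dt^[q] f)) (lc (Dt^[q] (Lop f)) q (Dt^[q-1] (Dx f))) := by
  have cm : ∀ n, Eo (Dx (Dt^[n] f)) (Dt^[n] (Dx f)) := by
    intro n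
    induction n with
    | zero => exact fun _ _ _ _ => rfl
    | succ n ih =>
      simp only [Function.iterate_succ_apply']
      exact (h.dtn n).comm.trans' ih.dt
  induction q with
  | zero => intro t x _ _; simp [lc]
  | succ q ih =>
    intro t x ht hx
    simp only [Function.iterate_succ_apply']
    rw [lop_dt (h.dtn q) t x ht hx]
    simp only [lc]
    rw [ih.dt t x ht hx, dt_lc (h.lop.dtn q) (h.dx.dtn _) _ t x ht hx]
    simp only [lc]
    rw [cm q t x ht hx, ← Function.iterate_succ_apply' Dt (q-1)]
    cases q with
    | zero => simp
    | succ n => simp; ring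

theorem dx_dtn {f : ℝ → ℝ → ℝ} (h : Sm f) (n : ℕ) : Eo (Dx (Dt^[n] f)) (Dt^[n] (Dx f)) := by
  induction n with
  | zero => exact fun _ _ _ _ => rfl
  | succ n ih =>
    simp only [Function.iterate_succ_apply']
    exact (h.dtn n).comm.trans' ih.dt

theorem lop_all {w : ℝ → ℝ → ℝ} (h : Sm w) (p q : ℕ) {t x : ℝ} (ht : 0 < t) (hx : x ≠ 0) :
    Lop (Dt^[p] (Dx^[q] w)) t x = Dt^[p] (Dx^[q] (Lop w)) t x
      - q * Dt^[p+1] (Dx^[q-1] w) t x - p * Dt^[p-1] (Dx^[q+1] w) t x := by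
  rw [lop_dtn (h.dxn q) p t x ht hx]
  simp only [lc]
  rw [(lop_dxn h q).dtn p t x ht hx, dtn_lc (h.lop.dxn q) (h.dxn _).dt _ p t x ht hx]
  simp only [lc]
  rw [Function.iterate_succ_apply, Function.iterate_succ_apply' Dx q]

theorem key {v : ℝ → ℝ → ℝ} (h : Sm v) {t x : ℝ} (ht : 0 < t) (hx : x ≠ 0) :
    |(|x| - t) * Dt (Dt v) t x| ≤ (t^2/|x|) * |Box v t x|
      + (|Lop (Dt v) t x| + |Lop (Dx v) t x|) := by
  have hx0 : 0 < |x| := abs_pos.mpr hx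
  have c := h.comm t x ht hx
  have hs : |x| * |x| = x * x := abs_mul_abs_self x
  have id1 : (|x| + t) * ((|x| - t) * Dt (Dt v) t x)
      = x * Lop (Dt v) t x - t * Lop (Dx v) t x - t^2 * Box v t x := by
    simp only [Lop, Box, c]
    linear_combination (Dt (Dt v) t x) * hs
  have id2 : (|x| + t) * |(|x| - t) * Dt (Dt v) t x|
      ≤ |x| * |Lop (Dt v) t x| + t * |Lop (Dx v) t x| + t^2 * |Box v t x| := by
    rw [← abs_of_pos (show 0 < |x| + t by positivity), ← abs_mul, id1]
    refine (abs_sub _ _).trans (add_le_add ((abs_sub _ _).trans ?_) ?_)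
    · simp [abs_mul, abs_of_pos ht]
    · simp [abs_mul]
  have hB : t^2 * |Box v t x| ≤ (|x| + t) * ((t^2/|x|) * |Box v t x|) := by
    have : (|x| + t) * ((t^2/|x|) * |Box v t x|)
      = t^2 * |Box v t x| + t * ((t^2/|x|) * |Box v t x|) := by field_simp
    rw [this]
    have : 0 ≤ t * ((t^2/|x|) * |Box v t x|) := by positivity
    linarith
  have n1 := mul_nonneg ht.le (abs_nonneg (Lop (Dt v) t x))
  have n2 := mul_nonneg hx0.le (abs_nonneg (Lop (Dx v) t x))
  refine le_of_mul_le_mul_left ?_ (show 0 < |x| + t by positivity)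
  linarith

noncomputable def SS (u : ℝ → ℝ → ℝ) (N J : ℕ) (t x : ℝ) : ℝ :=
  ∑ a' ∈ Finset.range (N+1), ∑ b' ∈ Finset.range (N+1), ∑ j' ∈ Finset.range (J+2),
    (if a' + b' ≤ N then
      |Dt (Dt^[a'] (Dx^[b'] (Lop^[j'] u))) t x| + |Dx (Dt^[a'] (Dx^[b'] (Lop^[j'] u))) t x|
    else 0)

theorem term_le (u : ℝ → ℝ → ℝ) (N J : ℕ) (t x : ℝ) (a b j : ℕ) (h : a + b ≤ N) (hj : j ≤ J + 1) :
    |Dt (Dt^[a] (Dx^[b] (Lop^[j] u))) t x| + |Dx (Dt^[a] (Dx^[b] (Lop^[j] u))) t x|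
      ≤ SS u N J t x := by
  have h0 : ∀ a' b' j' : ℕ, 0 ≤ (if a' + b' ≤ N then
      |Dt (Dt^[a'] (Dx^[b'] (Lop^[j'] u))) t x| + |Dx (Dt^[a'] (Dx^[b'] (Lop^[j'] u))) t x|
    else 0) := by
    intro a' b' j'; split_ifs <;> positivity
  unfold SS
  refine le_trans ?_ (Finset.single_le_sum (fun i _ => Finset.sum_nonneg fun _ _ =>
    Finset.sum_nonneg fun _ _ => h0 _ _ _) (Finset.mem_range.2 (show a < N + 1 by omega)))
  refine le_trans ?_ (Finset.single_le_sum (fun i _ => 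
    Finset.sum_nonneg fun _ _ => h0 _ _ _) (Finset.mem_range.2 (show b < N + 1 by omega)))
  refine le_trans ?_ (Finset.single_le_sum (fun i _ => h0 _ _ _)
    (Finset.mem_range.2 (show j < J + 2 by omega)))
  rw [if_pos h]

theorem term_le' (u : ℝ → ℝ → ℝ) (N J : ℕ) (t x : ℝ) (p q j : ℕ) (h : p + q = N + 1)
    (hj : j ≤ J + 1) : |Dt^[p] (Dx^[q] (Lop^[j] u)) t x| ≤ SS u N J t x := by
  cases p with
  | zero =>
    obtain rfl : q = N + 1 := by omega
    have := term_le u N J t x 0 N j (by omega) hj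
    simp only [Function.iterate_succ_apply', Function.iterate_zero, id] at this ⊢
    exact le_trans (le_add_of_nonneg_left (abs_nonneg _)) this
  | succ p =>
    have := term_le u N J t x p q j (by omega) hj
    rw [Function.iterate_succ_apply']
    exact le_trans (le_add_of_nonneg_right (abs_nonneg _)) this

theorem lop_le {u : ℝ → ℝ → ℝ} (h : Sm u) (p q j N : ℕ) (hN : p + q = N + 1) {t x : ℝ}
    (ht : 0 < t) (hx : x ≠ 0) :
    |Lop (Dt^[p] (Dx^[q] (Lop^[j] u))) t x| ≤ (N + 2) * SS u N j t x := by
  rw [lop_all (h.lopn j) p q ht hx, ← Function.iterate_succ_apply' Lop]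
  have h1 := term_le' u N j t x p q (j+1) hN le_rfl
  have h2 : |q * Dt^[p+1] (Dx^[q-1] (Lop^[j] u)) t x| ≤ q * SS u N j t x := by
    rw [abs_mul, Nat.abs_cast]
    rcases Nat.eq_zero_or_pos q with rfl | hq
    · simp
    · exact mul_le_mul_of_nonneg_left (term_le' u N j t x _ _ j (by omega) (by omega)) (by positivity)
  have h3 : |p * Dt^[p-1] (Dx^[q+1] (Lop^[j] u)) t x| ≤ p * SS u N j t x := by
    rw [abs_mul, Nat.abs_cast]
    rcases Nat.eq_zero_or_pos p with rfl | hq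
    · simp
    · exact mul_le_mul_of_nonneg_left (term_le' u N j t x _ _ j (by omega) (by omega)) (by positivity)
  have hc : (p : ℝ) + q = N + 1 := by exact_mod_cast hN
  refine (abs_sub _ _).trans ((add_le_add (abs_sub _ _) le_rfl).trans ?_)
  have : ((N : ℝ) + 2) * SS u N j t x = SS u N j t x + q * SS u N j t x + p * SS u N j t x := by
    linear_combination (-SS u N j t x) * hc
  rw [this]
  exact add_le_add (add_le_add h1 h2) h3

/-- Hessian bound
`|(|x|−t)·∂_t∂_t(∂_t^a ∂_x^b L^j u)| ≤ (t²/|x|)|□(∂_t^a ∂_x^b L^j u)| + C Σ |∂_α ∂_t^{a′}∂_x^{b′}L^{j′} u|`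
on `{t > 0, x ≠ 0}`, the sum running over `α ∈ {t,x}`, `a′+b′ ≤ a+b` and `j′ ≤ j+1`. -/
theorem stmt11 (a b j : ℕ) :
    ∃ C > (0:ℝ), ∀ u : ℝ → ℝ → ℝ,
      ContDiffOn ℝ (⊤ : ℕ∞) (fun p : ℝ × ℝ => u p.1 p.2) {p : ℝ × ℝ | 0 < p.1 ∧ p.2 ≠ 0} →
      ∀ t x : ℝ, 0 < t → x ≠ 0 →
        |(|x| - t) * Dt (Dt (Dt^[a] (Dx^[b] (Lop^[j] u)))) t x| ≤
          (t^2/|x|) * |Box (Dt^[a] (Dx^[b] (Lop^[j] u))) t x|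
          + C * ∑ a' ∈ Finset.range (a+b+1), ∑ b' ∈ Finset.range (a+b+1),
              ∑ j' ∈ Finset.range (j+2),
                (if a' + b' ≤ a + b then
                  |Dt (Dt^[a'] (Dx^[b'] (Lop^[j'] u))) t x| +
                  |Dx (Dt^[a'] (Dx^[b'] (Lop^[j'] u))) t x|
                else 0) := by
  refine ⟨2 * ((a + b : ℕ) + 2), by positivity, ?_⟩
  intro u hu t x ht hx
  have h : Sm u := hu
  have hw := h.lopn j
  have k := key ((hw.dxn b).dtn a) ht hx
  have l1 := lop_le h (a+1) b j (a+b) (by omega) ht hx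
  have l2 := lop_le h a (b+1) j (a+b) (by omega) ht hx
  rw [Function.iterate_succ_apply'] at l1
  rw [Function.iterate_succ_apply' Dx, ← (dx_dtn (hw.dxn b) a).lop t x ht hx] at l2
  change _ ≤ _ + _ * SS u (a+b) j t x
  linarith
end

section
/- There exists a constant C > 0 such that ρ(x)² ≤ C ∫_{−∞}^x ρ(y) dy for all x ∈ ℝ. Consequently, there is a constant C′ > 0 such that for all s ≥ 2 and all r ∈ [(s²−1)/2, (s²+1)/2], one has |ξ_s′(r)| ≤ C′ (1 − ξ_s(r))^{1/2}. -/
open MeasureTheory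

/-- The bump function `ρ(x) = exp(4/(4x²−1))` for `|x| < 1/2`, and `0` otherwise. -/
noncomputable def rho (x : ℝ) : ℝ := if |x| < 1/2 then Real.exp (4 / (4*x^2 - 1)) else 0

/-- The smooth cutoff `χ(x) = (∫_{−∞}^{x+1/2} ρ)/(∫_ℝ ρ)`. -/
noncomputable def chi (x : ℝ) : ℝ := (∫ y in Set.Iic (x + 1/2), rho y) / ∫ y, rho y

/-- `ξ_s(r) = 1 − χ(r − (s²−1)/2)`. -/
noncomputable def xi (s r : ℝ) : ℝ := 1 - chi (r - (s^2 - 1)/2)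

lemma rho_eq : rho = fun x => expNegInvGlue ((1 - 4*x^2)/4) := by
  funext x
  unfold rho expNegInvGlue
  have h : |x| < 1/2 ↔ ¬ ((1 - 4*x^2)/4 ≤ 0) := by
    rw [not_le, ← abs_of_pos (show (0:ℝ) < 1/2 by norm_num), ← sq_lt_sq]
    constructor <;> intro h <;> linarith
  by_cases hx : |x| < 1/2
  · rw [if_pos hx, if_neg (h.1 hx)]
    congr 1
    rw [inv_div, ← div_neg]
    congr 1
    ring
  · rw [if_neg hx, if_pos (not_not.1 (fun h' => hx (h.2 h')))]

lemma rho_contDiff : ContDiff ℝ 1 rho := by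
  rw [rho_eq]
  exact expNegInvGlue.contDiff.comp (by fun_prop)

lemma rho_nonneg (x : ℝ) : 0 ≤ rho x := by
  unfold rho
  split_ifs
  · exact (Real.exp_pos _).le
  · exact le_rfl

lemma rho_zero {x : ℝ} (h : 1/2 ≤ |x|) : rho x = 0 := by
  unfold rho
  rw [if_neg (not_lt.2 h)]

lemma rho_supp : HasCompactSupport rho := by
  apply HasCompactSupport.intro (K := Set.Icc (-1/2) (1/2)) isCompact_Icc
  intro x hx
  apply rho_zero
  by_contra h
  rw [not_le, abs_lt] at h
  exact hx ⟨by linarith [h.1], by linarith [h.2]⟩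

lemma rho_integrable : Integrable rho :=
  rho_contDiff.continuous.integrable_of_hasCompactSupport rho_supp

lemma rho_hasDeriv (x : ℝ) : HasDerivAt (fun x => ∫ y in Set.Iic x, rho y) (rho x) x := by
  have h : (fun x => ∫ y in Set.Iic x, rho y) =
      fun x => (∫ y in Set.Iic (0:ℝ), rho y) + ∫ y in (0:ℝ)..x, rho y := by
    funext x
    rw [← intervalIntegral.integral_Iic_sub_Iic rho_integrable.integrableOn
      rho_integrable.integrableOn]
    ring
  rw [h]
  exact (intervalIntegral.integral_hasDerivAt_right
    (rho_contDiff.continuous.intervalIntegrable _ _)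
    (rho_contDiff.continuous.stronglyMeasurableAtFilter _ _)
    rho_contDiff.continuous.continuousAt).const_add _

lemma rho_sq : ∃ C > (0:ℝ), ∀ x : ℝ, (rho x)^2 ≤ C * ∫ y in Set.Iic x, rho y := by
  obtain ⟨M, hM⟩ := (rho_contDiff.continuous_deriv le_rfl).bounded_above_of_compact_support
    rho_supp.deriv
  have hM0 : 0 ≤ M := (norm_nonneg _).trans (hM 0)
  refine ⟨2 * M + 1, by linarith, fun x => ?_⟩
  have hd : ∀ x, HasDerivAt (fun x => (2*M+1) * (∫ y in Set.Iic x, rho y) - (rho x)^2)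
      ((2*M+1) * rho x - 2 * rho x * deriv rho x) x := by
    intro x
    have h1 := ((rho_contDiff.differentiable (by norm_num)) x).hasDerivAt
    have := ((rho_hasDeriv x).const_mul (2*M+1)).sub (h1.pow 2)
    have e : (2*M+1) * rho x - 2 * rho x * deriv rho x =
        (2*M+1) * rho x - ((2:ℕ):ℝ) * rho x ^ (2-1) * deriv rho x := by norm_num
    rw [e]
    exact this
  have hm : Monotone (fun x => (2*M+1) * (∫ y in Set.Iic x, rho y) - (rho x)^2) := by
    apply monotone_of_deriv_nonneg (fun x => (hd x).differentiableAt)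
    intro x
    rw [(hd x).deriv]
    have h2 := (le_abs_self _).trans (hM x)
    nlinarith [rho_nonneg x]
  have h3 := hm (min_le_left x (-1/2))
  have h4 : rho (min x (-1/2)) = 0 := by
    apply rho_zero
    have := min_le_right x (-1/2)
    rw [le_abs]; right; linarith
  have h5 : 0 ≤ ∫ y in Set.Iic (min x (-1/2)), rho y :=
    integral_nonneg fun y => rho_nonneg y
  simp only [h4] at h3
  nlinarith

/-- `ρ(x)² ≤ C ∫_{−∞}^x ρ` for all `x`, and consequently
`|ξ_s′(r)| ≤ C′(1 − ξ_s(r))^{1/2}` for `s ≥ 2` and `(s²−1)/2 ≤ r ≤ (s²+1)/2`. -/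
theorem stmt12 :
    (∃ C > (0:ℝ), ∀ x : ℝ, (rho x)^2 ≤ C * ∫ y in Set.Iic x, rho y) ∧
    (∃ C' > (0:ℝ), ∀ s : ℝ, 2 ≤ s → ∀ r : ℝ, (s^2 - 1)/2 ≤ r → r ≤ (s^2 + 1)/2 →
      |deriv (xi s) r| ≤ C' * Real.sqrt (1 - xi s r)) := by
  refine ⟨rho_sq, ?_⟩
  obtain ⟨C, hC, h⟩ := rho_sq
  have hI : 0 < ∫ y, rho y := by
    apply rho_contDiff.continuous.integral_pos_of_hasCompactSupport_nonneg_nonzero rho_supp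
      rho_nonneg (x := 0)
    unfold rho
    norm_num
  refine ⟨Real.sqrt (C / ∫ y, rho y), Real.sqrt_pos.2 (div_pos hC hI), fun s _ r _ _ => ?_⟩
  have hd : HasDerivAt (xi s) (-(rho (r - (s^2-1)/2 + 1/2) / ∫ y, rho y)) r := by
    have h0 : HasDerivAt (fun r : ℝ => r - (s^2-1)/2 + 1/2) 1 r :=
      ((hasDerivAt_id r).sub_const _).add_const _
    have h1 := (((rho_hasDeriv (r - (s^2-1)/2 + 1/2)).comp r h0).div_const
      (∫ y, rho y)).const_sub 1
    rw [mul_one] at h1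
    exact h1
  rw [hd.deriv, abs_neg, ← Real.sqrt_mul (div_pos hC hI).le]
  apply Real.abs_le_sqrt
  have h2 := h (r - (s^2-1)/2 + 1/2)
  unfold xi chi
  rw [sub_sub_cancel, div_pow, div_mul_div_comm, ← sq]
  gcongr
end

section
/- Let T^{αβ} (α, β ∈ {0,1}) be real constants satisfying the null condition T^{00} + T^{01} + T^{10} + T^{11} = 0 and T^{00} − T^{01} − T^{10} + T^{11} = 0 (i.e. the associated quadratic form vanishes on the null vectors (1,1) and (1,−1)). Define the semi-hyperboloidal component T̄^{00}(t,x) := T^{00} − (x/t)(T^{01} + T^{10}) + (x/t)² T^{11} on {t > 0}. Then T̄^{00}(t,x) = ((t² − x²)/t²) T^{00}; moreover, there exist constants C(a,b,j) such that for all (t,x) in the cone {(t,x) : |x| ≤ t − 1}, |∂_t^a ∂_x^b L^j T̄^{00}(t,x)| ≤ C(0,0,j) (t² − x²)/t² when a + b = 0, and |∂_t^a ∂_x^b L^j T̄^{00}(t,x)| ≤ C(a,b,j) t^{−(a+b)} when a + b ≥ 1. -/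
open MeasureTheory

def HomP (n : ℕ) (P : Polynomial ℝ) (u : ℝ → ℝ → ℝ) : Prop :=
  ∀ t x : ℝ, 0 < t → u t x = (t⁻¹)^n * P.eval (x * t⁻¹)

lemma HomP.dx {n : ℕ} {P : Polynomial ℝ} {u : ℝ → ℝ → ℝ} (h : HomP n P u) :
    HomP (n+1) (Polynomial.derivative P) (Dx u) := by
  intro t x ht
  have e : (fun y => u t y) = fun y => (t⁻¹)^n * P.eval (y * t⁻¹) := by
    funext y; exact h t y ht
  have hd : HasDerivAt (fun y : ℝ => (t⁻¹)^n * P.eval (y * t⁻¹))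
      ((t⁻¹)^n * ((Polynomial.derivative P).eval (x * t⁻¹) * (1 * t⁻¹))) x :=
    (((P.hasDerivAt (x * t⁻¹)).comp x ((hasDerivAt_id x).mul_const t⁻¹))).const_mul _
  unfold Dx
  rw [e, hd.deriv]
  ring

lemma HomP.dt {n : ℕ} {P : Polynomial ℝ} {u : ℝ → ℝ → ℝ} (h : HomP n P u) :
    HomP (n+1) (-(Polynomial.C (n:ℝ) * P) - Polynomial.X * Polynomial.derivative P) (Dt u) := by
  intro t x ht
  have e : (fun τ => u τ x) =ᶠ[nhds t] fun τ => (τ⁻¹)^n * P.eval (x * τ⁻¹) := by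
    filter_upwards [lt_mem_nhds ht] with τ hτ
    exact h τ x hτ
  have hi : HasDerivAt (fun τ : ℝ => τ⁻¹) (-(t^2)⁻¹) t := hasDerivAt_inv ht.ne'
  have hc : HasDerivAt (fun τ : ℝ => P.eval (x * τ⁻¹))
      ((Polynomial.derivative P).eval (x * t⁻¹) * (x * (-(t^2)⁻¹))) t :=
    HasDerivAt.comp (h₂ := fun y => P.eval y) t (P.hasDerivAt (x * t⁻¹)) (hi.const_mul x)
  have hd : HasDerivAt (fun τ : ℝ => (τ⁻¹)^n * P.eval (x * τ⁻¹))
      (((n:ℝ) * (t⁻¹)^(n-1) * (-(t^2)⁻¹)) * P.eval (x * t⁻¹) +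
        (t⁻¹)^n * ((Polynomial.derivative P).eval (x * t⁻¹) * (x * (-(t^2)⁻¹)))) t :=
    (hi.pow n).mul hc
  unfold Dt
  rw [e.deriv_eq, hd.deriv]
  simp only [Polynomial.eval_sub, Polynomial.eval_neg, Polynomial.eval_mul, Polynomial.eval_C,
    Polynomial.eval_X, ← inv_pow]
  rcases n with _ | n
  · simp; ring
  · simp only [Nat.add_sub_cancel]; ring

lemma HomP.lop {P : Polynomial ℝ} {u : ℝ → ℝ → ℝ} (h : HomP 0 P u) :
    HomP 0 ((1 - Polynomial.X^2) * Polynomial.derivative P) (Lop u) := by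
  intro t x ht
  unfold Lop
  rw [h.dt t x ht, h.dx t x ht]
  have : t * t⁻¹ = 1 := mul_inv_cancel₀ ht.ne'
  simp
  linear_combination (Polynomial.derivative P).eval (x * t⁻¹) * this

lemma HomP.dx_iter {n : ℕ} {P : Polynomial ℝ} {u : ℝ → ℝ → ℝ} (h : HomP n P u) (b : ℕ) :
    ∃ Q, HomP (n+b) Q (Dx^[b] u) := by
  induction b with
  | zero => exact ⟨P, h⟩
  | succ b ih =>
    obtain ⟨Q, hQ⟩ := ih
    rw [Function.iterate_succ_apply']
    exact ⟨_, hQ.dx⟩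

lemma HomP.dt_iter {n : ℕ} {P : Polynomial ℝ} {u : ℝ → ℝ → ℝ} (h : HomP n P u) (b : ℕ) :
    ∃ Q, HomP (n+b) Q (Dt^[b] u) := by
  induction b with
  | zero => exact ⟨P, h⟩
  | succ b ih =>
    obtain ⟨Q, hQ⟩ := ih
    rw [Function.iterate_succ_apply']
    exact ⟨_, hQ.dt⟩

lemma HomP.lop_iter {P : Polynomial ℝ} {u : ℝ → ℝ → ℝ}
    (h : HomP 0 ((1 - Polynomial.X^2) * P) u) (j : ℕ) :
    ∃ Q, HomP 0 ((1 - Polynomial.X^2) * Q) (Lop^[j] u) := by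
  induction j with
  | zero => exact ⟨P, h⟩
  | succ b ih =>
    obtain ⟨Q, hQ⟩ := ih
    rw [Function.iterate_succ_apply']
    exact ⟨_, hQ.lop⟩

lemma poly_bdd (P : Polynomial ℝ) :
    ∃ C > (0:ℝ), ∀ t x : ℝ, |x| ≤ t - 1 → |P.eval (x * t⁻¹)| ≤ C := by
  obtain ⟨C, hC⟩ := (isCompact_Icc (a := (-1:ℝ)) (b := 1)).exists_bound_of_continuousOn
    P.continuous.continuousOn
  refine ⟨max C 1, by positivity, fun t x h => (hC _ ?_).trans (le_max_left _ _)⟩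
  have ht : 0 < t := by linarith [abs_nonneg x]
  rw [Set.mem_Icc, ← abs_le, abs_mul, abs_inv, abs_of_pos ht, ← div_eq_mul_inv, div_le_one ht]
  linarith

/-- for a constant 2-tensor `T^{αβ}` satisfying the null condition, the
semi-hyperboloidal component `T̄^{00}(t,x) = T^{00} − (x/t)(T^{01}+T^{10}) + (x/t)²T^{11}`
equals `((t²−x²)/t²)T^{00}` on `{t > 0}`, and inside the cone `{|x| ≤ t−1}` its derivatives
satisfy `|L^j T̄^{00}| ≤ C(t²−x²)/t²` and `|∂_t^a ∂_x^b L^j T̄^{00}| ≤ C t^{−(a+b)}` for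
`a+b ≥ 1`. -/
theorem stmt13 (T00 T01 T10 T11 : ℝ)
    (h1 : T00 + T01 + T10 + T11 = 0) (h2 : T00 - T01 - T10 + T11 = 0) :
    (∀ t x : ℝ, 0 < t →
      T00 - (x/t) * (T01 + T10) + (x/t)^2 * T11 = ((t^2 - x^2)/t^2) * T00) ∧
    (∀ j : ℕ, ∃ C > (0:ℝ), ∀ t x : ℝ, |x| ≤ t - 1 →
      |(Lop^[j] (fun t x => T00 - (x/t) * (T01 + T10) + (x/t)^2 * T11)) t x| ≤
        C * ((t^2 - x^2)/t^2)) ∧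
    (∀ a b j : ℕ, 1 ≤ a + b → ∃ C > (0:ℝ), ∀ t x : ℝ, |x| ≤ t - 1 →
      |(Dt^[a] (Dx^[b] (Lop^[j]
          (fun t x => T00 - (x/t) * (T01 + T10) + (x/t)^2 * T11)))) t x| ≤
        C * t ^ (-((a:ℤ) + (b:ℤ)))) := by
  have e1 : T10 = -T01 := by linarith
  have e2 : T11 = -T00 := by linarith
  subst e1 e2
  have hb : HomP 0 ((1 - Polynomial.X^2) * Polynomial.C T00)
      (fun t x => T00 - (x/t) * (T01 + -T01) + (x/t)^2 * -T00) := by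
    intro t x ht
    simp
    ring
  refine ⟨?_, ?_, ?_⟩
  · intro t x ht
    field_simp
    ring
  · intro j
    obtain ⟨Q, hQ⟩ := hb.lop_iter j
    obtain ⟨C, hC, hCb⟩ := poly_bdd Q
    refine ⟨C, hC, fun t x h => ?_⟩
    have ht : 0 < t := by linarith [abs_nonneg x]
    have hx : 0 ≤ (t^2 - x^2)/t^2 := by
      apply div_nonneg _ (sq_nonneg t)
      have := sq_le_sq' (by linarith [(abs_le.mp h).1] : -t ≤ x) (by linarith [(abs_le.mp h).2])
      linarith
    have e : (1 - (x * t⁻¹)^2) = (t^2 - x^2)/t^2 := by field_simp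
    rw [hQ t x ht]
    simp only [pow_zero, one_mul, Polynomial.eval_mul, Polynomial.eval_sub, Polynomial.eval_one,
      Polynomial.eval_pow, Polynomial.eval_X]
    rw [e, abs_mul, abs_of_nonneg hx, mul_comm]
    exact mul_le_mul_of_nonneg_right (hCb t x h) hx
  · intro a b j _
    obtain ⟨Q, hQ⟩ := hb.lop_iter j
    obtain ⟨R, hR⟩ := hQ.dx_iter b
    obtain ⟨S, hS⟩ := hR.dt_iter a
    obtain ⟨C, hC, hCb⟩ := poly_bdd S
    refine ⟨C, hC, fun t x h => ?_⟩
    have ht : 0 < t := by linarith [abs_nonneg x]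
    have e : t ^ (-((a:ℤ) + (b:ℤ))) = (t⁻¹)^(0+b+a) := by
      rw [zpow_neg, ← Nat.cast_add, zpow_natCast, inv_pow]
      congr 2
      omega
    rw [hS t x ht, e, abs_mul, abs_of_nonneg (by positivity), mul_comm]
    exact mul_le_mul_of_nonneg_right (hCb t x h) (by positivity)
end

section
/- Let 2 ≤ s₀ ≤ s₁, let c ≥ 0, and let u be a twice continuously differentiable function on a neighborhood of the region R = {(t,x) : |x| ≤ t − 1, s₀² ≤ t² − x² ≤ s₁²}, and let f be continuous on R with ∂_t∂_t u − ∂_x∂_x u + c² u = f on R. For s ∈ [s₀, s₁] define the hyperboloidal energy E(s) := ∫_{|x| ≤ (s²−1)/2} ( (∂_t u)² + (∂_x u)² + 2 (x/√(s²+x²)) ∂_t u ∂_x u + c² u² ) evaluated at (√(s²+x²), x) dx, and the cone flux K(s) := ∫_{(s₀²+1)/2}^{(s²+1)/2} [ ( (∂̃₁u)² + c² u² )(t, t−1) + ( (∂̃₁u)² + c² u² )(t, −(t−1)) ] dt, where ∂̃₁u(t,x) = (x/|x|) ∂_t u + ∂_x u. Then for every s ∈ [s₀, s₁], E(s) ≤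 E(s₀) + K(s) + 2 ∫_{s₀}^{s} E(τ)^{1/2} · ( ∫_{|x| ≤ (τ²−1)/2} f(√(τ²+x²), x)² dx )^{1/2} dτ. -/
open MeasureTheory

/-- The hyperboloidal energy
`E(s) = ∫_{|x|≤(s²−1)/2} ((∂_t u)² + (∂_x u)² + 2(x/√(s²+x²))∂_t u ∂_x u + c²u²)`
evaluated on the hyperboloid `t = √(s²+x²)`. -/
noncomputable def hypEnergy (c : ℝ) (u : ℝ → ℝ → ℝ) (s : ℝ) : ℝ :=
  ∫ x in (-((s^2 - 1)/2))..((s^2 - 1)/2),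
    ((Dt u (Real.sqrt (s^2 + x^2)) x)^2 + (Dx u (Real.sqrt (s^2 + x^2)) x)^2
      + 2 * (x / Real.sqrt (s^2 + x^2)) *
          Dt u (Real.sqrt (s^2 + x^2)) x * Dx u (Real.sqrt (s^2 + x^2)) x
      + c^2 * (u (Real.sqrt (s^2 + x^2)) x)^2)

/-- The flux along the cone `{t = |x| + 1}` between the hyperboloids of radii `s₀` and `s`. -/
noncomputable def coneFlux (c : ℝ) (u : ℝ → ℝ → ℝ) (s₀ s : ℝ) : ℝ :=
  ∫ t in ((s₀^2 + 1)/2)..((s^2 + 1)/2),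
    (((Nd u t (t - 1))^2 + c^2 * (u t (t - 1))^2)
      + ((Nd u t (-(t - 1)))^2 + c^2 * (u t (-(t - 1)))^2))

open Set

lemma aux_contpar (F : ℝ × ℝ → ℝ) (a b : ℝ) (hab : a ≤ b)
    (hF : ContinuousOn F (Icc a b ×ˢ Icc (-1) 1)) :
    ContinuousOn (fun τ => ∫ y in (-1:ℝ)..1, F (τ, y)) (Icc a b) := by
  let cl : ℝ × ℝ → ℝ × ℝ := fun z => (max a (min b z.1), max (-1) (min 1 z.2))
  have hcl : Continuous cl := by fun_prop
  have hm : ∀ z, cl z ∈ Icc a b ×ˢ Icc (-1:ℝ) 1 := by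
    intro z
    refine ⟨⟨le_max_left _ _, max_le hab (min_le_left _ _)⟩,
      ⟨le_max_left _ _, max_le (by norm_num) (min_le_left _ _)⟩⟩
  have hc : Continuous (fun z => F (cl z)) := hF.comp_continuous hcl hm
  have h2 : Continuous fun τ => ∫ y in (-1:ℝ)..1, F (cl (τ, y)) :=
    intervalIntegral.continuous_parametric_intervalIntegral_of_continuous'
      (f := fun τ y => F (cl (τ, y))) (by simpa [Function.uncurry_def] using hc) _ _
  refine h2.continuousOn.congr ?_
  intro τ hτ
  refine intervalIntegral.integral_congr ?_
  intro y hy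
  rw [uIcc_of_le (by norm_num)] at hy
  simp only [cl]
  rw [min_eq_right hτ.2, max_eq_right hτ.1, min_eq_right hy.2, max_eq_right hy.1]

lemma aux_CS (g h : ℝ → ℝ) (a b : ℝ) (hab : a ≤ b) (hg : ContinuousOn g (Icc a b))
    (hh : ContinuousOn h (Icc a b)) :
    ∫ x in a..b, g x * h x ≤ √(∫ x in a..b, g x ^ 2) * √(∫ x in a..b, h x ^ 2) := by
  rw [← uIcc_of_le hab] at hg hh
  have i1 : IntervalIntegrable (fun x => g x ^ 2) volume a b := (hg.pow 2).intervalIntegrable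
  have i2 : IntervalIntegrable (fun x => h x ^ 2) volume a b := (hh.pow 2).intervalIntegrable
  have i3 : IntervalIntegrable (fun x => g x * h x) volume a b := (hg.mul hh).intervalIntegrable
  have n1 : 0 ≤ ∫ x in a..b, g x ^ 2 :=
    intervalIntegral.integral_nonneg hab (fun x _ => sq_nonneg _)
  have key : ∀ l : ℝ, 0 ≤ (∫ x in a..b, g x ^ 2) * (l * l) + (2 * ∫ x in a..b, g x * h x) * l
      + ∫ x in a..b, h x ^ 2 := by
    intro l
    have h0 : 0 ≤ ∫ x in a..b, (g x * l + h x) ^ 2 :=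
      intervalIntegral.integral_nonneg hab (fun x _ => sq_nonneg _)
    have h1 : ∫ x in a..b, (g x * l + h x) ^ 2
        = ∫ x in a..b, ((l * l) * g x ^ 2 + (2 * l) * (g x * h x) + h x ^ 2) := by
      congr 1; ext x; ring
    rw [h1, intervalIntegral.integral_add ((i1.const_mul _).add (i3.const_mul _)) i2,
      intervalIntegral.integral_add (i1.const_mul _) (i3.const_mul _),
      intervalIntegral.integral_const_mul, intervalIntegral.integral_const_mul] at h0
    linarith
  have hd := discrim_le_zero key
  rw [discrim] at hd
  rw [← Real.sqrt_mul n1]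
  apply Real.le_sqrt_of_sq_le
  nlinarith

lemma aux_Dt (v : ℝ → ℝ → ℝ) (z : ℝ × ℝ)
    (h : DifferentiableAt ℝ (fun p : ℝ × ℝ => v p.1 p.2) z) :
    Dt v z.1 z.2 = fderiv ℝ (fun p : ℝ × ℝ => v p.1 p.2) z (1, 0) := by
  have h1 : HasDerivAt (fun t : ℝ => ((t, z.2) : ℝ × ℝ)) (1, 0) z.1 :=
    (hasDerivAt_id _).prodMk (hasDerivAt_const _ _)
  exact (h.hasFDerivAt.comp_hasDerivAt (f := fun t : ℝ => ((t, z.2) : ℝ × ℝ)) z.1 h1).deriv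

lemma aux_Dx (v : ℝ → ℝ → ℝ) (z : ℝ × ℝ)
    (h : DifferentiableAt ℝ (fun p : ℝ × ℝ => v p.1 p.2) z) :
    Dx v z.1 z.2 = fderiv ℝ (fun p : ℝ × ℝ => v p.1 p.2) z (0, 1) := by
  have h1 : HasDerivAt (fun t : ℝ => ((z.1, t) : ℝ × ℝ)) (0, 1) z.2 :=
    (hasDerivAt_const _ _).prodMk (hasDerivAt_id _)
  exact (h.hasFDerivAt.comp_hasDerivAt (f := fun t : ℝ => ((z.1, t) : ℝ × ℝ)) z.2 h1).deriv

lemma aux_C2 (u : ℝ → ℝ → ℝ) (U : Set (ℝ × ℝ)) (hU : IsOpen U)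
    (hu : ContDiffOn ℝ 2 (fun p : ℝ × ℝ => u p.1 p.2) U) (z : ℝ × ℝ) (hz : z ∈ U) :
    DifferentiableAt ℝ (fun p : ℝ × ℝ => u p.1 p.2) z ∧
    DifferentiableAt ℝ (fun p : ℝ × ℝ => Dt u p.1 p.2) z ∧
    DifferentiableAt ℝ (fun p : ℝ × ℝ => Dx u p.1 p.2) z ∧
    fderiv ℝ (fun p : ℝ × ℝ => Dt u p.1 p.2) z (0, 1)
      = fderiv ℝ (fun p : ℝ × ℝ => Dx u p.1 p.2) z (1, 0) := by
  set w : ℝ × ℝ → ℝ := fun p : ℝ × ℝ => u p.1 p.2 with hw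
  have hd : ∀ y ∈ U, DifferentiableAt ℝ w y := fun y hy =>
    (hu.contDiffAt (hU.mem_nhds hy)).differentiableAt (by norm_num)
  have hc : ContDiffAt ℝ 2 w z := hu.contDiffAt (hU.mem_nhds hz)
  have hc1 : DifferentiableAt ℝ (fderiv ℝ w) z :=
    (hc.fderiv_right (m := 1) (by norm_num)).differentiableAt (by norm_num)
  have e1 : (fun p : ℝ × ℝ => Dt u p.1 p.2) =ᶠ[nhds z] fun y => fderiv ℝ w y (1, 0) := by
    filter_upwards [hU.mem_nhds hz] with y hy
    exact aux_Dt u y (hd y hy)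
  have e2 : (fun p : ℝ × ℝ => Dx u p.1 p.2) =ᶠ[nhds z] fun y => fderiv ℝ w y (0, 1) := by
    filter_upwards [hU.mem_nhds hz] with y hy
    exact aux_Dx u y (hd y hy)
  have d1 : ∀ v : ℝ × ℝ, HasFDerivAt (fun y => fderiv ℝ w y v)
      ((ContinuousLinearMap.apply ℝ ℝ v).comp (fderiv ℝ (fderiv ℝ w) z)) z := fun v =>
    (ContinuousLinearMap.apply ℝ ℝ v).hasFDerivAt.comp z hc1.hasFDerivAt
  have f1 := (d1 (1, 0)).congr_of_eventuallyEq e1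
  have f2 := (d1 (0, 1)).congr_of_eventuallyEq e2
  refine ⟨hd z hz, f1.differentiableAt, f2.differentiableAt, ?_⟩
  rw [f1.fderiv, f2.fderiv]
  simpa using hc.isSymmSndFDerivAt (by simp) (0, 1) (1, 0)

lemma aux_slice (w : ℝ × ℝ → ℝ) (T X : ℝ → ℝ) (T' X' r : ℝ)
    (hT : HasDerivAt T T' r) (hX : HasDerivAt X X' r)
    (hw : DifferentiableAt ℝ w (T r, X r)) :
    HasDerivAt (fun r => w (T r, X r))
      (fderiv ℝ w (T r, X r) (1, 0) * T' + fderiv ℝ w (T r, X r) (0, 1) * X') r := by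
  have h := hw.hasFDerivAt.comp_hasDerivAt (f := fun r => (T r, X r)) r (hT.prodMk hX)
  refine HasDerivAt.congr_deriv h ?_
  have : ((T', X') : ℝ × ℝ) = T' • (1, 0) + X' • (0, 1) := by simp
  rw [this, map_add, map_smul, map_smul]
  simp [mul_comm]

noncomputable def auxG (c : ℝ) (w p q : ℝ × ℝ → ℝ) (T X : ℝ) : ℝ :=
  p (T, X) ^ 2 + q (T, X) ^ 2 + 2 * (X / T) * p (T, X) * q (T, X) + c ^ 2 * w (T, X) ^ 2

noncomputable def auxT (z : ℝ × ℝ) : ℝ := √(z.1 ^ 2 + ((z.1 ^ 2 - 1) / 2 * z.2) ^ 2)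
noncomputable def auxX (z : ℝ × ℝ) : ℝ := (z.1 ^ 2 - 1) / 2 * z.2

noncomputable def auxF1 (c : ℝ) (w p q : ℝ × ℝ → ℝ) (z : ℝ × ℝ) : ℝ :=
  (z.1 ^ 2 - 1) / 2 * auxG c w p q (auxT z) (auxX z)

noncomputable def auxF2 (c : ℝ) (w p q : ℝ × ℝ → ℝ) (z : ℝ × ℝ) : ℝ :=
  -(z.1 * z.2 * auxG c w p q (auxT z) (auxX z)
    + 2 * z.1 * p (auxT z, auxX z) * q (auxT z, auxX z) / auxT z)

lemma aux_div (c : ℝ) (w p q : ℝ × ℝ → ℝ) (z : ℝ × ℝ) (hz : 0 < z.1)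
    (hw : DifferentiableAt ℝ w (auxT z, auxX z))
    (hp : DifferentiableAt ℝ p (auxT z, auxX z))
    (hq : DifferentiableAt ℝ q (auxT z, auxX z))
    (hwt : fderiv ℝ w (auxT z, auxX z) (1, 0) = p (auxT z, auxX z))
    (hpq : fderiv ℝ p (auxT z, auxX z) (0, 1) = fderiv ℝ q (auxT z, auxX z) (1, 0)) :
    DifferentiableAt ℝ (auxF1 c w p q) z ∧ DifferentiableAt ℝ (auxF2 c w p q) z ∧
    fderiv ℝ (auxF1 c w p q) z (1, 0) + fderiv ℝ (auxF2 c w p q) z (0, 1)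
      = (z.1 ^ 2 - 1) / 2 * (2 * (z.1 / auxT z * p (auxT z, auxX z) *
        (fderiv ℝ p (auxT z, auxX z) (1, 0) - fderiv ℝ q (auxT z, auxX z) (0, 1)
          + c ^ 2 * w (auxT z, auxX z)))) := by
  obtain ⟨s, y⟩ := z
  simp only at hz
  have hpos : 0 < s ^ 2 + ((s ^ 2 - 1) / 2 * y) ^ 2 := by positivity
  have hTpos : 0 < auxT (s, y) := Real.sqrt_pos.2 hpos
  have dT : DifferentiableAt ℝ auxT (s, y) := by
    unfold auxT
    exact DifferentiableAt.sqrt (by fun_prop) hpos.ne'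
  have dX : DifferentiableAt ℝ auxX (s, y) := by
    unfold auxX; fun_prop
  have dw : DifferentiableAt ℝ (fun z => w (auxT z, auxX z)) (s, y) :=
    DifferentiableAt.comp (s, y) hw (dT.prodMk dX)
  have dp : DifferentiableAt ℝ (fun z => p (auxT z, auxX z)) (s, y) :=
    DifferentiableAt.comp (s, y) hp (dT.prodMk dX)
  have dq : DifferentiableAt ℝ (fun z => q (auxT z, auxX z)) (s, y) :=
    DifferentiableAt.comp (s, y) hq (dT.prodMk dX)
  have dG : DifferentiableAt ℝ (fun z => auxG c w p q (auxT z) (auxX z)) (s, y) := by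
    unfold auxG
    simp only [div_eq_mul_inv]
    have hTne := hTpos.ne'
    fun_prop (disch := exact hTne)
  have d1 : DifferentiableAt ℝ (auxF1 c w p q) (s, y) := by
    unfold auxF1; fun_prop
  have d2 : DifferentiableAt ℝ (auxF2 c w p q) (s, y) := by
    unfold auxF2
    simp only [div_eq_mul_inv] at *
    have hTne := hTpos.ne'
    fun_prop (disch := exact hTne)
  refine ⟨d1, d2, ?_⟩
  -- slices
  have s1 : fderiv ℝ (auxF1 c w p q) (s, y) (1, 0) = deriv (fun t => auxF1 c w p q (t, y)) s :=
    (aux_Dt (fun a b => auxF1 c w p q (a, b)) (s, y) d1).symm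
  have s2 : fderiv ℝ (auxF2 c w p q) (s, y) (0, 1) = deriv (fun t => auxF2 c w p q (s, t)) y :=
    (aux_Dx (fun a b => auxF2 c w p q (a, b)) (s, y) d2).symm
  have hA : HasDerivAt (fun t : ℝ => (t ^ 2 - 1) / 2) s s := by
    have := (((hasDerivAt_id s).pow 2).sub_const 1).div_const 2
    refine HasDerivAt.congr_deriv this ?_
    simp
  have X1 : HasDerivAt (fun t => auxX (t, y)) (s * y) s := by
    unfold auxX; exact hA.mul_const y
  have X2 : HasDerivAt (fun t => auxX (s, t)) ((s ^ 2 - 1) / 2) y := by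
    unfold auxX
    simpa using (hasDerivAt_id y).const_mul ((s ^ 2 - 1) / 2)
  have T1 : HasDerivAt (fun t => auxT (t, y)) ((s + auxX (s, y) * (s * y)) / auxT (s, y)) s := by
    have h := (((hasDerivAt_id s).pow 2).add (X1.pow 2)).sqrt hpos.ne'
    refine HasDerivAt.congr_deriv h ?_
    change _ / (2 * auxT (s, y)) = _
    simp
    field_simp
  have T2 : HasDerivAt (fun t => auxT (s, t)) (auxX (s, y) * ((s ^ 2 - 1) / 2) / auxT (s, y)) y := by
    have h := (((hasDerivAt_const y s).pow 2).add (X2.pow 2)).sqrt hpos.ne'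
    refine HasDerivAt.congr_deriv h ?_
    change _ / (2 * auxT (s, y)) = _
    simp
    field_simp
  have w1 := aux_slice w _ _ _ _ _ T1 X1 hw
  have w2 := aux_slice w _ _ _ _ _ T2 X2 hw
  have p1 := aux_slice p _ _ _ _ _ T1 X1 hp
  have p2 := aux_slice p _ _ _ _ _ T2 X2 hp
  have q1 := aux_slice q _ _ _ _ _ T1 X1 hq
  have q2 := aux_slice q _ _ _ _ _ T2 X2 hq
  have r1 := X1.div T1 hTpos.ne'
  have r2 := X2.div T2 hTpos.ne'
  have G1 := (((p1.pow 2).add (q1.pow 2)).add (((r1.const_mul 2).mul p1).mul q1)).add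
    ((w1.pow 2).const_mul (c ^ 2))
  have G2 := (((p2.pow 2).add (q2.pow 2)).add (((r2.const_mul 2).mul p2).mul q2)).add
    ((w2.pow 2).const_mul (c ^ 2))
  have H1 := hA.mul G1
  have H2 := ((((hasDerivAt_id y).const_mul s).mul G2).add
    (((p2.const_mul (2 * s)).mul q2).div T2 hTpos.ne')).neg
  have E1 := H1.deriv
  have E2 := H2.deriv
  rw [s1, s2]
  have k1 : deriv (fun t => auxF1 c w p q (t, y)) s = _ := E1
  have k2 : deriv (fun t => auxF2 c w p q (s, t)) y = _ := E2
  rw [k1, k2]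
  simp only [Pi.add_apply, Pi.mul_apply, Pi.pow_apply, Pi.div_apply, id, hwt, hpq]
  have hX : auxX (s, y) = (s ^ 2 - 1) / 2 * y := rfl
  rw [hX] at *
  clear k1 k2 E1 E2 H1 H2 G1 G2 s1 s2 r1 r2 w1 w2 p1 p2 q1 q2 T1 T2
  generalize auxT (s, y) = T at *
  field_simp
  push_cast
  ring

lemma aux_mem (s₀ s₁ s y : ℝ) (hs₀ : 2 ≤ s₀) (h1 : s₀ ≤ s) (h2 : s ≤ s₁)
    (hy : y ∈ Icc (-1 : ℝ) 1) :
    (auxT (s, y), auxX (s, y)) ∈ {p : ℝ × ℝ | |p.2| ≤ p.1 - 1 ∧ s₀^2 ≤ p.1^2 - p.2^2 ∧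
      p.1^2 - p.2^2 ≤ s₁^2} := by
  have hT : auxT (s, y) ^ 2 = s ^ 2 + auxX (s, y) ^ 2 := by
    unfold auxT auxX; exact Real.sq_sqrt (by positivity)
  have hT0 : 0 ≤ auxT (s, y) := Real.sqrt_nonneg _
  have hy' : |y| ≤ 1 := abs_le.2 hy
  have hX : |auxX (s, y)| ≤ (s ^ 2 - 1) / 2 := by
    unfold auxX
    have h0 : 0 ≤ (s ^ 2 - 1) / 2 := by nlinarith
    simp only [abs_mul, abs_of_nonneg h0]
    exact mul_le_of_le_one_right h0 hy'
  refine ⟨?_, ?_, ?_⟩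
  · have : |auxX (s, y)| + 1 ≤ auxT (s, y) := by
      refine (sq_le_sq₀ (by positivity) hT0).1 ?_
      rw [hT]
      nlinarith [sq_abs (auxX (s, y))]
    simp only; linarith
  · simp only; rw [hT]; nlinarith
  · simp only; rw [hT]; nlinarith

lemma aux_T_one (s y : ℝ) (hy : y ^ 2 = 1) : auxT (s, y) = (s ^ 2 + 1) / 2 := by
  unfold auxT
  rw [show (s, y).1 ^ 2 + (((s, y).1 ^ 2 - 1) / 2 * (s, y).2) ^ 2 = ((s ^ 2 + 1) / 2) ^ 2 by
    simp only; rw [mul_pow, hy]; ring]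
  exact Real.sqrt_sq (by positivity)

/-- energy estimate in the interior (hyperboloidal) region: if
`□u + c²u = f` on `R = {|x| ≤ t−1, s₀² ≤ t²−x² ≤ s₁²}`, then for `s ∈ [s₀,s₁]`,
`E(s) ≤ E(s₀) + K(s) + 2∫_{s₀}^s E(τ)^{1/2}‖f‖_{L²(H_τ)} dτ`. -/
theorem stmt16 (s₀ s₁ c : ℝ) (hs₀ : 2 ≤ s₀) (hss : s₀ ≤ s₁) (hc : 0 ≤ c)
    (u f : ℝ → ℝ → ℝ) (U : Set (ℝ × ℝ)) (hU : IsOpen U)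
    (hRU : {p : ℝ × ℝ | |p.2| ≤ p.1 - 1 ∧ s₀^2 ≤ p.1^2 - p.2^2 ∧ p.1^2 - p.2^2 ≤ s₁^2} ⊆ U)
    (hu : ContDiffOn ℝ 2 (fun p : ℝ × ℝ => u p.1 p.2) U)
    (hf : ContinuousOn (fun p : ℝ × ℝ => f p.1 p.2)
      {p : ℝ × ℝ | |p.2| ≤ p.1 - 1 ∧ s₀^2 ≤ p.1^2 - p.2^2 ∧ p.1^2 - p.2^2 ≤ s₁^2})
    (heq : ∀ p ∈ {p : ℝ × ℝ | |p.2| ≤ p.1 - 1 ∧ s₀^2 ≤ p.1^2 - p.2^2 ∧ p.1^2 - p.2^2 ≤ s₁^2},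
      Box u p.1 p.2 + c^2 * u p.1 p.2 = f p.1 p.2) :
    ∀ s : ℝ, s₀ ≤ s → s ≤ s₁ →
      hypEnergy c u s ≤ hypEnergy c u s₀ + coneFlux c u s₀ s
        + 2 * ∫ τ in s₀..s, Real.sqrt (hypEnergy c u τ) *
            Real.sqrt (∫ x in (-((τ^2 - 1)/2))..((τ^2 - 1)/2),
              (f (Real.sqrt (τ^2 + x^2)) x)^2) := by
  intro s hs hs'
  set R : Set (ℝ × ℝ) := {p : ℝ × ℝ | |p.2| ≤ p.1 - 1 ∧ s₀^2 ≤ p.1^2 - p.2^2 ∧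
    p.1^2 - p.2^2 ≤ s₁^2} with hR
  set w : ℝ × ℝ → ℝ := fun z => u z.1 z.2 with hw
  set p : ℝ × ℝ → ℝ := fun z => Dt u z.1 z.2 with hp
  set q : ℝ × ℝ → ℝ := fun z => Dx u z.1 z.2 with hq
  have hmem : ∀ z ∈ Icc s₀ s ×ˢ Icc (-1:ℝ) 1, (auxT z, auxX z) ∈ R := by
    rintro ⟨τ, y⟩ ⟨h1, h2⟩
    exact aux_mem s₀ s₁ τ y hs₀ h1.1 (h1.2.trans hs') h2
  have hC := fun z hz => aux_C2 u U hU hu z hz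
  have hTpos : ∀ z ∈ Icc s₀ s ×ˢ Icc (-1:ℝ) 1, 0 < auxT z := by
    intro z hz
    have h1 := (hmem z hz).1
    have := abs_nonneg (auxX z)
    simp only at h1
    linarith
  have hD : ∀ z ∈ Icc s₀ s ×ˢ Icc (-1:ℝ) 1,
      DifferentiableAt ℝ (auxF1 c w p q) z ∧ DifferentiableAt ℝ (auxF2 c w p q) z ∧
      fderiv ℝ (auxF1 c w p q) z (1, 0) + fderiv ℝ (auxF2 c w p q) z (0, 1)
      = (z.1 ^ 2 - 1) / 2 * (2 * (z.1 / auxT z * p (auxT z, auxX z) * f (auxT z) (auxX z))) := by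
    intro z hz
    have hzR := hmem z hz
    obtain ⟨a1, a2, a3, a4⟩ := hC _ (hRU hzR)
    have hz1 : 0 < z.1 := by have := hz.1.1; linarith
    obtain ⟨b1, b2, b3⟩ := aux_div c w p q z hz1 a1 a2 a3 (aux_Dt u _ a1).symm a4
    refine ⟨b1, b2, ?_⟩
    rw [b3]
    have h1 := heq _ hzR
    have h2 : Dt (Dt u) (auxT z) (auxX z) = _ := aux_Dt (Dt u) (auxT z, auxX z) a2
    have h3 : Dx (Dx u) (auxT z) (auxX z) = _ := aux_Dx (Dx u) (auxT z, auxX z) a3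
    simp only [Box] at h1
    rw [h2, h3] at h1
    rw [← h1]
  have cT : Continuous auxT := by unfold auxT; fun_prop
  have cX : Continuous auxX := by unfold auxX; fun_prop
  have cTX : ContinuousOn (fun z => (auxT z, auxX z)) (Icc s₀ s ×ˢ Icc (-1:ℝ) 1) :=
    (cT.prodMk cX).continuousOn
  have cw : ContinuousOn w R := fun z hz => (hC z (hRU hz)).1.continuousAt.continuousWithinAt
  have cp : ContinuousOn p R := fun z hz => (hC z (hRU hz)).2.1.continuousAt.continuousWithinAt
  have cq : ContinuousOn q R := fun z hz => (hC z (hRU hz)).2.2.1.continuousAt.continuousWithinAt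
  have cpT : ContinuousOn (fun z => p (auxT z, auxX z)) (Icc s₀ s ×ˢ Icc (-1:ℝ) 1) :=
    cp.comp cTX hmem
  have cfT : ContinuousOn (fun z => f (auxT z) (auxX z)) (Icc s₀ s ×ˢ Icc (-1:ℝ) 1) :=
    hf.comp cTX hmem
  have cF1 : ContinuousOn (auxF1 c w p q) (Icc s₀ s ×ˢ Icc (-1:ℝ) 1) :=
    fun z hz => (hD z hz).1.continuousAt.continuousWithinAt
  have cF2 : ContinuousOn (auxF2 c w p q) (Icc s₀ s ×ˢ Icc (-1:ℝ) 1) :=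
    fun z hz => (hD z hz).2.1.continuousAt.continuousWithinAt
  have cg : ContinuousOn (fun z : ℝ × ℝ => z.1 / auxT z * p (auxT z, auxX z))
      (Icc s₀ s ×ˢ Icc (-1:ℝ) 1) :=
    (continuous_fst.continuousOn.div cT.continuousOn (fun z hz => (hTpos z hz).ne')).mul cpT
  have cS : ContinuousOn (fun z : ℝ × ℝ => (z.1 ^ 2 - 1) / 2 *
      (2 * (z.1 / auxT z * p (auxT z, auxX z) * f (auxT z) (auxX z))))
      (Icc s₀ s ×ˢ Icc (-1:ℝ) 1) :=
    ContinuousOn.mul (by fun_prop) (continuousOn_const.mul (cg.mul cfT))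
  have hm1 : (-1:ℝ) ≤ 1 := by norm_num
  have hdiv := integral2_divergence_prod_of_hasFDerivAt (auxF1 c w p q) (auxF2 c w p q)
    (fderiv ℝ (auxF1 c w p q)) (fderiv ℝ (auxF2 c w p q)) s₀ (-1) s 1
    (by rwa [uIcc_of_le hs, uIcc_of_le hm1])
    (by rwa [uIcc_of_le hs, uIcc_of_le hm1])
    (by
      rw [min_eq_left hs, max_eq_right hs, min_eq_left hm1, max_eq_right hm1]
      intro z hz
      exact (hD z ⟨Ioo_subset_Icc_self hz.1, Ioo_subset_Icc_self hz.2⟩).1.hasFDerivAt)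
    (by
      rw [min_eq_left hs, max_eq_right hs, min_eq_left hm1, max_eq_right hm1]
      intro z hz
      exact (hD z ⟨Ioo_subset_Icc_self hz.1, Ioo_subset_Icc_self hz.2⟩).2.1.hasFDerivAt)
    (by
      rw [uIcc_of_le hs, uIcc_of_le hm1]
      refine IntegrableOn.congr_fun (cS.integrableOn_compact (isCompact_Icc.prod isCompact_Icc))
        (fun z hz => (hD z hz).2.2.symm) (measurableSet_Icc.prod measurableSet_Icc))
  -- the energy
  have hE : ∀ τ, hypEnergy c u τ = ∫ y in (-1:ℝ)..1, auxF1 c w p q (τ, y) := by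
    intro τ
    unfold hypEnergy auxF1
    simp only
    rw [intervalIntegral.integral_const_mul]
    have := intervalIntegral.mul_integral_comp_mul_left (a := -1) (b := 1)
      (f := fun x => auxG c w p q (√(τ ^ 2 + x ^ 2)) x) (c := (τ ^ 2 - 1) / 2)
    rw [mul_neg, mul_one] at this
    exact this.symm
  have hN : ∀ τ, (∫ x in (-((τ^2 - 1)/2))..((τ^2 - 1)/2), (f (Real.sqrt (τ^2 + x^2)) x)^2)
      = (τ ^ 2 - 1) / 2 * ∫ y in (-1:ℝ)..1, f (auxT (τ, y)) (auxX (τ, y)) ^ 2 := by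
    intro τ
    have := intervalIntegral.mul_integral_comp_mul_left (a := -1) (b := 1)
      (f := fun x => (f (Real.sqrt (τ^2 + x^2)) x)^2) (c := (τ ^ 2 - 1) / 2)
    rw [mul_neg, mul_one] at this
    exact this.symm
  -- the cone flux
  have hK : (∫ τ in s₀..s, auxF2 c w p q (τ, 1)) - (∫ τ in s₀..s, auxF2 c w p q (τ, -1))
      = - coneFlux c u s₀ s := by
    have i1 : IntervalIntegrable (fun τ => auxF2 c w p q (τ, 1)) volume s₀ s := by
      apply ContinuousOn.intervalIntegrable
      rw [uIcc_of_le hs]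
      exact cF2.comp (by fun_prop) (fun τ hτ => ⟨hτ, by norm_num⟩)
    have i2 : IntervalIntegrable (fun τ => auxF2 c w p q (τ, -1)) volume s₀ s := by
      apply ContinuousOn.intervalIntegrable
      rw [uIcc_of_le hs]
      exact cF2.comp (by fun_prop) (fun τ hτ => ⟨hτ, by norm_num⟩)
    rw [← intervalIntegral.integral_sub i1 i2]
    let k : ℝ → ℝ := fun t => ((p (t, t - 1) + q (t, t - 1)) ^ 2 + c ^ 2 * w (t, t - 1) ^ 2)
      + ((p (t, -(t - 1)) - q (t, -(t - 1))) ^ 2 + c ^ 2 * w (t, -(t - 1)) ^ 2)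
    have hss2 : (s₀ ^ 2 + 1) / 2 ≤ (s ^ 2 + 1) / 2 := by nlinarith
    have hk : coneFlux c u s₀ s = ∫ t in ((s₀^2 + 1)/2)..((s^2 + 1)/2), k t := by
      refine intervalIntegral.integral_congr ?_
      intro t ht
      rw [uIcc_of_le hss2] at ht
      have ht1 : 0 < t - 1 := by nlinarith [ht.1]
      simp only [k, Nd, abs_neg, abs_of_pos ht1, neg_div, div_self ht1.ne', hw, hp, hq]
      ring
    have himg : ∀ t ∈ Icc ((s₀ ^ 2 + 1) / 2) ((s ^ 2 + 1) / 2), (t, t - 1) ∈ R ∧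
        (t, -(t - 1)) ∈ R := by
      intro t ht
      have ht1 : 0 < t - 1 := by nlinarith [ht.1]
      refine ⟨⟨?_, ?_, ?_⟩, ⟨?_, ?_, ?_⟩⟩ <;> simp only [abs_neg, abs_of_pos ht1, le_refl] <;>
        nlinarith [ht.1, ht.2]
    have j1 : ContinuousOn (fun t : ℝ => (t, t - 1)) (Icc ((s₀ ^ 2 + 1) / 2) ((s ^ 2 + 1) / 2)) := by
      fun_prop
    have j2 : ContinuousOn (fun t : ℝ => (t, -(t - 1))) (Icc ((s₀ ^ 2 + 1) / 2) ((s ^ 2 + 1) / 2)) := by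
      fun_prop
    have kc : ContinuousOn k (Icc ((s₀ ^ 2 + 1) / 2) ((s ^ 2 + 1) / 2)) := by
      have w1 := cw.comp j1 (fun t ht => (himg t ht).1)
      have w2 := cw.comp j2 (fun t ht => (himg t ht).2)
      have p1 := cp.comp j1 (fun t ht => (himg t ht).1)
      have p2 := cp.comp j2 (fun t ht => (himg t ht).2)
      have q1 := cq.comp j1 (fun t ht => (himg t ht).1)
      have q2 := cq.comp j2 (fun t ht => (himg t ht).2)
      exact (((p1.add q1).pow 2).add ((w1.pow 2).const_mul _)).add
        (((p2.sub q2).pow 2).add ((w2.pow 2).const_mul _))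
    have hsub := intervalIntegral.integral_comp_mul_deriv' (a := s₀) (b := s)
      (f := fun τ : ℝ => (τ ^ 2 + 1) / 2) (f' := fun τ => τ) (g := k)
      (by
        intro x _
        have := (((hasDerivAt_id x).pow 2).add_const 1).div_const 2
        refine HasDerivAt.congr_deriv this ?_
        simp)
      continuousOn_id
      (by
        refine kc.mono ?_
        rintro _ ⟨x, hx, rfl⟩
        rw [uIcc_of_le hs] at hx
        have := hx.1; have := hx.2
        constructor <;> simp only <;> nlinarith)
    rw [hk, ← hsub, ← intervalIntegral.integral_neg]
    refine intervalIntegral.integral_congr ?_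
    intro τ hτ
    rw [uIcc_of_le hs] at hτ
    have e1 : auxX (τ, 1) = (τ ^ 2 + 1) / 2 - 1 := by simp only [auxX]; ring
    have e2 : auxX (τ, -1) = -((τ ^ 2 + 1) / 2 - 1) := by simp only [auxX]; ring
    simp only [auxF2, auxG, aux_T_one τ 1 (by norm_num), aux_T_one τ (-1) (by norm_num), e1, e2,
      Function.comp, k]
    have : 0 < τ ^ 2 + 1 := by positivity
    field_simp
    ring
  -- the source
  have hS : (∫ τ in s₀..s, ∫ y in (-1:ℝ)..1, fderiv ℝ (auxF1 c w p q) (τ, y) (1, 0)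
      + fderiv ℝ (auxF2 c w p q) (τ, y) (0, 1)) ≤
      ∫ τ in s₀..s, 2 * (Real.sqrt (hypEnergy c u τ) *
            Real.sqrt (∫ x in (-((τ^2 - 1)/2))..((τ^2 - 1)/2),
              (f (Real.sqrt (τ^2 + x^2)) x)^2)) := by
    have hrw : ∀ τ ∈ Icc s₀ s, (∫ y in (-1:ℝ)..1, fderiv ℝ (auxF1 c w p q) (τ, y) (1, 0)
      + fderiv ℝ (auxF2 c w p q) (τ, y) (0, 1)) = ∫ y in (-1:ℝ)..1,
        (τ ^ 2 - 1) / 2 * (2 * (τ / auxT (τ, y) * p (auxT (τ, y), auxX (τ, y))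
          * f (auxT (τ, y)) (auxX (τ, y)))) := by
      intro τ hτ
      refine intervalIntegral.integral_congr ?_
      intro y hy
      rw [uIcc_of_le hm1] at hy
      exact (hD (τ, y) ⟨hτ, hy⟩).2.2
    refine intervalIntegral.integral_mono_on hs ?_ ?_ ?_
    · apply ContinuousOn.intervalIntegrable
      rw [uIcc_of_le hs]
      exact (aux_contpar _ s₀ s hs cS).congr (fun τ hτ => hrw τ hτ)
    · apply ContinuousOn.intervalIntegrable
      rw [uIcc_of_le hs]
      simp only [hE, hN]
      have c1 := aux_contpar _ s₀ s hs cF1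
      have c2 := aux_contpar _ s₀ s hs (cfT.pow 2)
      have c3 : ContinuousOn (fun τ : ℝ => (τ ^ 2 - 1) / 2) (Icc s₀ s) := by fun_prop
      exact continuousOn_const.mul (c1.sqrt.mul (c3.mul c2).sqrt)
    · intro τ hτ
      rw [hrw τ hτ, hE, hN]
      have hA : 0 ≤ (τ ^ 2 - 1) / 2 := by have := hτ.1; nlinarith
      have sl : ContinuousOn (fun y : ℝ => (τ, y)) (Icc (-1) 1) := by fun_prop
      have g1 := cg.comp sl (fun y hy => ⟨hτ, hy⟩)
      have f1 := cfT.comp sl (fun y hy => ⟨hτ, hy⟩)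
      have F1 := cF1.comp sl (fun y hy => ⟨hτ, hy⟩)
      have cs := aux_CS _ _ (-1) 1 hm1 g1 f1
      simp only [Function.comp] at cs
      rw [intervalIntegral.integral_const_mul, intervalIntegral.integral_const_mul]
      have hle : (τ ^ 2 - 1) / 2 * (∫ y in (-1:ℝ)..1,
          (τ / auxT (τ, y) * p (auxT (τ, y), auxX (τ, y))) ^ 2) ≤
          ∫ y in (-1:ℝ)..1, auxF1 c w p q (τ, y) := by
        rw [← intervalIntegral.integral_const_mul]
        refine intervalIntegral.integral_mono_on hm1 ?_ ?_ ?_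
        · apply ContinuousOn.intervalIntegrable
          rw [uIcc_of_le hm1]
          exact continuousOn_const.mul (g1.pow 2)
        · apply ContinuousOn.intervalIntegrable
          rw [uIcc_of_le hm1]
          exact F1
        · intro y hy
          have hTp := hTpos (τ, y) ⟨hτ, hy⟩
          have hT : auxT (τ, y) ^ 2 = τ ^ 2 + auxX (τ, y) ^ 2 := by
            unfold auxT auxX; exact Real.sq_sqrt (by positivity)
          simp only [auxF1]
          refine mul_le_mul_of_nonneg_left ?_ hA
          have hr : (τ / auxT (τ, y)) ^ 2 = 1 - (auxX (τ, y) / auxT (τ, y)) ^ 2 := by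
            field_simp
            linarith
          rw [mul_pow, hr, auxG]
          have n1 := sq_nonneg (q (auxT (τ, y), auxX (τ, y))
            + auxX (τ, y) / auxT (τ, y) * p (auxT (τ, y), auxX (τ, y)))
          have n2 := mul_nonneg (sq_nonneg c) (sq_nonneg (w (auxT (τ, y), auxX (τ, y))))
          nlinarith
      have hsq : (τ ^ 2 - 1) / 2 * (√(∫ y in (-1:ℝ)..1,
            (τ / auxT (τ, y) * p (auxT (τ, y), auxX (τ, y))) ^ 2) *
          √(∫ y in (-1:ℝ)..1, f (auxT (τ, y)) (auxX (τ, y)) ^ 2)) =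
          √((τ ^ 2 - 1) / 2 * (∫ y in (-1:ℝ)..1,
            (τ / auxT (τ, y) * p (auxT (τ, y), auxX (τ, y))) ^ 2)) *
          √((τ ^ 2 - 1) / 2 * ∫ y in (-1:ℝ)..1, f (auxT (τ, y)) (auxX (τ, y)) ^ 2) := by
        rw [Real.sqrt_mul hA, Real.sqrt_mul hA]
        nth_rewrite 1 [← Real.mul_self_sqrt hA]
        ring
      have h1 := mul_le_mul_of_nonneg_left cs hA
      rw [hsq] at h1
      have h2 := mul_le_mul_of_nonneg_right (Real.sqrt_le_sqrt hle)
        (Real.sqrt_nonneg ((τ ^ 2 - 1) / 2 * ∫ y in (-1:ℝ)..1, f (auxT (τ, y)) (auxX (τ, y)) ^ 2))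
      linarith
  rw [intervalIntegral.integral_const_mul] at hS
  rw [hdiv, hK, ← hE, ← hE] at hS
  linarith
end

section
/- Let β ∈ ℝ and let u be a twice continuously differentiable function on an open subset of {(t,x) ∈ ℝ² : 0 < |x| < t}. Then, writing r = |x|, s = √(t² − x²), and ∂̄₁u = (x/t) ∂_t u + ∂_x u, the following identity holds: □u = (t−r)^{−β} [ (s/t)² ∂_t + (2x/t) ∂̄₁ ] ( (t−r)^{β} ∂_t u ) + ((t−r)/t²) ( (t+r)/t − β ) ∂_t u − ∂̄₁ ∂̄₁ u. -/
open MeasureTheory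

/-- The semi-hyperboloidal (hyperbolic) derivative `∂̄₁ u = (x/t) ∂_t u + ∂_x u`. -/
noncomputable def Db (u : ℝ → ℝ → ℝ) : ℝ → ℝ → ℝ := fun t x => (x/t) * Dt u t x + Dx u t x

lemma aux_all_s17 (u : ℝ → ℝ → ℝ) (U : Set (ℝ × ℝ)) (hU : IsOpen U)
    (hu : ContDiffOn ℝ 2 (fun p : ℝ × ℝ => u p.1 p.2) U) (t x : ℝ) (hp : (t, x) ∈ U) :
    ∃ a b c : ℝ, HasDerivAt (fun τ => Dt u τ x) a t ∧ HasDerivAt (fun y => Dt u t y) b x ∧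
      HasDerivAt (fun τ => Dx u τ x) b t ∧ HasDerivAt (fun y => Dx u t y) c x := by
  set F : ℝ × ℝ → ℝ := fun p => u p.1 p.2 with hF
  have h1 : ∀ (t x : ℝ), HasDerivAt (fun τ : ℝ => (τ, x)) ((1 : ℝ), (0 : ℝ)) t := fun t x =>
    (hasDerivAt_id t).prodMk (hasDerivAt_const t x)
  have h2 : ∀ (t x : ℝ), HasDerivAt (fun y : ℝ => (t, y)) ((0 : ℝ), (1 : ℝ)) x := fun t x =>
    (hasDerivAt_const x t).prodMk (hasDerivAt_id x)
  have hd : ∀ q ∈ U, HasFDerivAt F (fderiv ℝ F q) q := fun q hq =>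
    ((hu.contDiffAt (hU.mem_nhds hq)).differentiableAt (by norm_num)).hasFDerivAt
  have e1 : ∀ t x : ℝ, (t, x) ∈ U → Dt u t x = fderiv ℝ F (t, x) (1, 0) := fun t x hq =>
    (HasFDerivAt.comp_hasDerivAt (f := fun τ : ℝ => (τ, x)) t (hd (t, x) hq) (h1 t x)).deriv
  have e2 : ∀ t x : ℝ, (t, x) ∈ U → Dx u t x = fderiv ℝ F (t, x) (0, 1) := fun t x hq =>
    (HasFDerivAt.comp_hasDerivAt (f := fun y : ℝ => (t, y)) x (hd (t, x) hq) (h2 t x)).deriv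
  have hc := hu.contDiffAt (hU.mem_nhds hp)
  have hdd : HasFDerivAt (fderiv ℝ F) (fderiv ℝ (fderiv ℝ F) (t, x)) (t, x) :=
    ((hc.fderiv_right (m := 1) (by norm_num)).differentiableAt (by norm_num)).hasFDerivAt
  have hs : IsSymmSndFDerivAt ℝ F (t, x) := hc.isSymmSndFDerivAt (by simp)
  have n1 : ∀ᶠ τ in nhds t, (τ, x) ∈ U :=
    (h1 t x).continuousAt.eventually_mem (hU.mem_nhds hp)
  have n2 : ∀ᶠ y in nhds x, (t, y) ∈ U :=
    (h2 t x).continuousAt.eventually_mem (hU.mem_nhds hp)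
  have k1 := hdd.comp_hasDerivAt t (h1 t x)
  have k2 := hdd.comp_hasDerivAt x (h2 t x)
  refine ⟨fderiv ℝ (fderiv ℝ F) (t, x) (1, 0) (1, 0), fderiv ℝ (fderiv ℝ F) (t, x) (0, 1) (1, 0),
    fderiv ℝ (fderiv ℝ F) (t, x) (0, 1) (0, 1), ?_, ?_, ?_, ?_⟩
  · have := k1.clm_apply (hasDerivAt_const t ((1 : ℝ), (0 : ℝ)))
    simp only [map_zero, add_zero] at this
    exact this.congr_of_eventuallyEq (n1.mono fun τ h => e1 _ _ h)
  · have := k2.clm_apply (hasDerivAt_const x ((1 : ℝ), (0 : ℝ)))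
    simp only [map_zero, add_zero] at this
    exact this.congr_of_eventuallyEq (n2.mono fun τ h => e1 _ _ h)
  · have := k1.clm_apply (hasDerivAt_const t ((0 : ℝ), (1 : ℝ)))
    simp only [map_zero, add_zero] at this
    rw [hs.eq (0, 1) (1, 0)]
    exact this.congr_of_eventuallyEq (n1.mono fun τ h => e2 _ _ h)
  · have := k2.clm_apply (hasDerivAt_const x ((0 : ℝ), (1 : ℝ)))
    simp only [map_zero, add_zero] at this
    exact this.congr_of_eventuallyEq (n2.mono fun τ h => e2 _ _ h)

/-- for `u` twice continuously differentiable on an open subset of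
`{0 < |x| < t}`, writing `r = |x|` and `s² = t² − x²`,
`□u = (t−r)^{−β}[(s/t)²∂_t + (2x/t)∂̄₁]((t−r)^β ∂_t u) + ((t−r)/t²)((t+r)/t − β)∂_t u − ∂̄₁∂̄₁u`. -/
theorem stmt17 (β : ℝ) (u : ℝ → ℝ → ℝ) (U : Set (ℝ × ℝ)) (hU : IsOpen U)
    (hUsub : U ⊆ {p : ℝ × ℝ | 0 < |p.2| ∧ |p.2| < p.1})
    (hu : ContDiffOn ℝ 2 (fun p : ℝ × ℝ => u p.1 p.2) U) :
    ∀ p ∈ U, Box u p.1 p.2 =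
      (p.1 - |p.2|) ^ (-β) *
        (((p.1^2 - p.2^2)/p.1^2) * Dt (fun t x => (t - |x|) ^ β * Dt u t x) p.1 p.2
          + (2*p.2/p.1) * Db (fun t x => (t - |x|) ^ β * Dt u t x) p.1 p.2)
      + ((p.1 - |p.2|)/p.1^2) * ((p.1 + |p.2|)/p.1 - β) * Dt u p.1 p.2
      - Db (Db u) p.1 p.2 := by
  rintro ⟨t, x⟩ hp
  obtain ⟨hx0, hxt⟩ := hUsub hp
  simp only at hx0 hxt ⊢
  have ht : 0 < t := hx0.trans hxt
  have hw : 0 < t - |x| := sub_pos.2 hxt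
  have hxne : x ≠ 0 := abs_pos.1 hx0
  obtain ⟨a, b, c, ha, hb, hb', hc⟩ := aux_all_s17 u U hU hu t x hp
  obtain ⟨σ, hσ, hσx, hσ2⟩ : ∃ σ : ℝ, HasDerivAt (fun y : ℝ => |y|) σ x ∧ |x| = σ * x ∧ σ ^ 2 = 1 := by
    rcases lt_or_gt_of_ne hxne with h | h
    · exact ⟨-1, hasDerivAt_abs_neg h, by rw [abs_of_neg h]; ring, by norm_num⟩
    · exact ⟨1, hasDerivAt_abs_pos h, by rw [abs_of_pos h]; ring, by norm_num⟩
  have p1 := (((hasDerivAt_id t).sub_const |x|).rpow_const (p := β) (Or.inl hw.ne')).mul ha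
  have p2 := ((hσ.const_sub t).rpow_const (p := β) (Or.inl hw.ne')).mul hb
  have q1 := (((hasDerivAt_const t x).div (hasDerivAt_id t) ht.ne').mul ha).add hb'
  have q2 := (((hasDerivAt_id x).div_const t).mul hb).add hc
  have P1 : Dt (fun t x => (t - |x|) ^ β * Dt u t x) t x = _ := p1.deriv
  have P2 : Dx (fun t x => (t - |x|) ^ β * Dt u t x) t x = _ := p2.deriv
  have Q1 : Dt (Db u) t x = _ := q1.deriv
  have Q2 : Dx (Db u) t x = _ := q2.deriv
  have A : Dt (Dt u) t x = a := ha.deriv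
  have C : Dx (Dx u) t x = c := hc.deriv
  unfold Box
  rw [A, C]
  have E1 : ∀ f, Db f t x = (x / t) * Dt f t x + Dx f t x := fun f => rfl
  rw [E1, E1, P1, P2, Q1, Q2]
  simp only [id]
  rw [Real.rpow_sub_one hw.ne', Real.rpow_neg hw.le]
  have hpow : (t - |x|) ^ β ≠ 0 := (Real.rpow_pos_of_pos hw β).ne'
  generalize (t - |x|) ^ β = W at *
  generalize Dt u t x = v at *
  rw [hσx] at hw ⊢
  have ht' := ht.ne'
  clear p1 p2 q1 q2 P1 P2 Q1 Q2 hσ hσx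
  simp only [Pi.div_apply, id]
  rcases (sq_eq_sq_iff_eq_or_eq_neg.1 (hσ2.trans (one_pow 2).symm)) with h | h
  · subst h
    have hw' : t - x ≠ 0 := by simpa using hw.ne'
    simp only [one_mul]
    field_simp
    ring
  · subst h
    have hw' : t + x ≠ 0 := by simpa using hw.ne'
    simp only [neg_mul, one_mul, sub_neg_eq_add]
    field_simp
    ring
end
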